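/- arXiv:1709.05025 — 3 statements merged into one kernel-verified Lean document; each statement's English description precedes it below -/
import Mathlib

section
/- The subgroup H = ⟨σ, τ⟩ of GL(3,ℂ) is the internal direct product of S(2,1) and the cyclic group generated by diag(ζ₅, ζ₅, 1): these two subgroups of H commute elementwise, intersect trivially, and together generate H. Consequently H ≅ SL(2,5) × ℤ/5 and |H| = 600. -/
noncomputable section
open Matrix

def zeta5 : ℂ := Complex.exp (2 * Real.pi * Complex.I / 5)

def sqrt5 : ℂ := zeta5 - zeta5 ^ 2 - zeta5 ^ 3 + zeta5 ^ 4

def alpha : Matrix (Fin 2) (Fin 2) ℂ := -(Matrix.of ![![zeta5 ^ 3, 0], ![0, zeta5 ^ 2]])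
def beta : Matrix (Fin 2) (Fin 2) ℂ := Matrix.of ![![0, 1], ![-1, 0]]
def gamma : Matrix (Fin 2) (Fin 2) ℂ :=
  (zeta5 ^ 2 - zeta5 ^ 3)⁻¹ •
    Matrix.of ![![zeta5 + zeta5⁻¹, 1], ![1, -(zeta5 + zeta5⁻¹)]]

/-- The block-diagonal embedding of a `2 × 2` matrix into `GL(3)`, with last diagonal entry 1. -/
def emb (A : Matrix (Fin 2) (Fin 2) ℂ) : Matrix (Fin 3) (Fin 3) ℂ :=
  Matrix.of ![![A 0 0, A 0 1, 0], ![A 1 0, A 1 1, 0], ![0, 0, 1]]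

def alpha' : Matrix (Fin 3) (Fin 3) ℂ := emb alpha
def beta' : Matrix (Fin 3) (Fin 3) ℂ := emb beta
def gamma' : Matrix (Fin 3) (Fin 3) ℂ := emb gamma

def sigma : Matrix (Fin 3) (Fin 3) ℂ :=
  Matrix.of ![![(zeta5 - zeta5 ^ 4) / sqrt5, (zeta5 ^ 3 - zeta5 ^ 2) / sqrt5, 0],
    ![(zeta5 ^ 3 - zeta5 ^ 2) / sqrt5, -((zeta5 - zeta5 ^ 4) / sqrt5), 0],
    ![0, 0, 1]]

def tau : Matrix (Fin 3) (Fin 3) ℂ := Matrix.diagonal ![zeta5, 1, 1]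

def rho : Matrix (Fin 3) (Fin 3) ℂ := Matrix.diagonal ![zeta5 ^ 3, zeta5 ^ 2, 1]

/-- The subgroup of `GL(3, ℂ)` generated by the invertible matrices in `S`. -/
def gen3 (S : Set (Matrix (Fin 3) (Fin 3) ℂ)) : Subgroup (GL (Fin 3) ℂ) :=
  Subgroup.closure {g : GL (Fin 3) ℂ | (g : Matrix (Fin 3) (Fin 3) ℂ) ∈ S}

/-- `S(2,1) = ⟨α', β', γ'⟩`. -/
def S21 : Subgroup (GL (Fin 3) ℂ) := gen3 {alpha', beta', gamma'}

abbrev SL25 := Matrix.SpecialLinearGroup (Fin 2) (ZMod 5)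

/-- `H = ⟨σ, τ⟩`. -/
def H : Subgroup (GL (Fin 3) ℂ) := gen3 {sigma, tau}

/-- The cyclic subgroup generated by `diag(ζ₅, ζ₅, 1)`. -/
def Dz : Subgroup (GL (Fin 3) ℂ) := gen3 {Matrix.diagonal ![zeta5, zeta5, 1]}

/-- The element `a + bζ + cζ² + dζ³` of `ℤ[ζ₅]`. -/
structure CycInt where
  a : ℤ
  b : ℤ
  c : ℤ
  d : ℤ

instance : DecidableEq CycInt := fun p q =>
  decidable_of_iff (p.a = q.a ∧ p.b = q.b ∧ p.c = q.c ∧ p.d = q.d)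
    (by cases p; cases q; simp)

namespace CycInt

def add (p q : CycInt) : CycInt := ⟨p.a + q.a, p.b + q.b, p.c + q.c, p.d + q.d⟩

def smul (n : ℤ) (p : CycInt) : CycInt := ⟨n * p.a, n * p.b, n * p.c, n * p.d⟩

/-- Multiplication, reduced with `ζ⁴ = -1 - ζ - ζ² - ζ³`. -/
def mul (p q : CycInt) : CycInt :=
  let c4 := p.b * q.d + p.c * q.c + p.d * q.b
  let c5 := p.c * q.d + p.d * q.c
  let c6 := p.d * q.d
  ⟨p.a * q.a - c4 + c5,
   p.a * q.b + p.b * q.a - c4 + c6,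
   p.a * q.c + p.b * q.b + p.c * q.a - c4,
   p.a * q.d + p.b * q.c + p.c * q.b + p.d * q.a - c4⟩

/-- `ζ ^ n`. -/
def pw (n : ℕ) : CycInt :=
  match n % 5 with
  | 0 => ⟨1, 0, 0, 0⟩
  | 1 => ⟨0, 1, 0, 0⟩
  | 2 => ⟨0, 0, 1, 0⟩
  | 3 => ⟨0, 0, 0, 1⟩
  | _ => ⟨-1, -1, -1, -1⟩

def ev (p : CycInt) : ℂ := p.a + p.b * zeta5 + p.c * zeta5 ^ 2 + p.d * zeta5 ^ 3

end CycInt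

open CycInt

/-- `2 × 2` matrices over `ℤ[ζ₅]`. -/
structure CycMat where
  x : CycInt
  y : CycInt
  z : CycInt
  w : CycInt

instance : DecidableEq CycMat := fun p q =>
  decidable_of_iff (p.x = q.x ∧ p.y = q.y ∧ p.z = q.z ∧ p.w = q.w)
    (by cases p; cases q; simp)

namespace CycMat

def mul (m n : CycMat) : CycMat :=
  ⟨(m.x.mul n.x).add (m.y.mul n.z), (m.x.mul n.y).add (m.y.mul n.w),
   (m.z.mul n.x).add (m.w.mul n.z), (m.z.mul n.y).add (m.w.mul n.w)⟩

def smul (k : ℤ) (m : CycMat) : CycMat :=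
  ⟨m.x.smul k, m.y.smul k, m.z.smul k, m.w.smul k⟩

/-- The complex `3 × 3` matrix attached to `m / 5`. -/
def ev (m : CycMat) : Matrix (Fin 3) (Fin 3) ℂ :=
  Matrix.of ![![m.x.ev / 5, m.y.ev / 5, 0], ![m.z.ev / 5, m.w.ev / 5, 0], ![0, 0, 1]]

end CycMat

def legendre5 (a : ℕ) : ℤ := if a = 1 ∨ a = 4 then 1 else -1

/-- Five times the `(x, y)` entry of the odd Weil representation of `SL(2, 5)`. -/
def weilEntry (a b c d x y : ℕ) : CycInt :=
  if c = 0 then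
    (pw (3 * a * b * x * x)).smul
      (5 * (legendre5 a * ((if y % 5 = a * x % 5 then 1 else 0) -
        (if (y + a * x) % 5 = 0 then 1 else 0))))
  else
    ((pw (3 * (a * x * x + d * y * y) * c ^ 3)).mul
      ((pw (x * y * c ^ 3)).add ((pw (4 * x * y * c ^ 3)).smul (-1)))).mul
      (CycInt.smul (legendre5 c) ⟨-1, 0, -2, -2⟩)

def weilN (a b c d : ℕ) : CycMat :=
  ⟨weilEntry a b c d 1 1, weilEntry a b c d 1 3, weilEntry a b c d 3 1, weilEntry a b c d 3 3⟩

def weilZ (a b c d : ZMod 5) : CycMat := weilN a.val b.val c.val d.val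

theorem weilZ_w : ∀ a b c d : ZMod 5, a * d - b * c = 1 →
    (weilZ 0 4 1 0).mul (weilZ a b c d) = (weilZ (-c) (-d) a b).smul 5 := by
  decide +kernel

theorem weilZ_t : ∀ a b c d : ZMod 5, a * d - b * c = 1 →
    (weilZ 1 1 0 1).mul (weilZ a b c d) = (weilZ (a + c) (b + d) c d).smul 5 := by
  decide +kernel

theorem weilZ_inj : ∀ a b c d : ZMod 5, a * d - b * c = 1 →
    weilZ a b c d = weilZ 1 0 0 1 → a = 1 ∧ b = 0 ∧ c = 0 ∧ d = 1 := by
  decide +kernel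

theorem card_aux : Fintype.card {p : ZMod 5 × ZMod 5 × ZMod 5 × ZMod 5 //
    p.1 * p.2.2.2 - p.2.1 * p.2.2.1 = 1} = 120 := by
  decide +kernel

theorem zeta5_prim : IsPrimitiveRoot zeta5 5 := by
  have := Complex.isPrimitiveRoot_exp 5 (by norm_num)
  simpa [zeta5] using this

theorem zeta5_sum : 1 + zeta5 + zeta5 ^ 2 + zeta5 ^ 3 + zeta5 ^ 4 = 0 := by
  have := zeta5_prim.geom_sum_eq_zero (by norm_num)
  simpa [Finset.sum_range_succ] using this

theorem zeta5_five : zeta5 ^ 5 = 1 := zeta5_prim.pow_eq_one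

namespace CycInt

theorem ev_mul (p q : CycInt) : (p.mul q).ev = p.ev * q.ev := by
  simp only [ev, mul]
  push_cast
  linear_combination (-(p.b * q.d + p.c * q.c + p.d * q.b : ℂ) -
    (p.c * q.d + p.d * q.c) * (zeta5 - 1) - p.d * q.d * zeta5 * (zeta5 - 1)) * zeta5_sum

theorem ev_add (p q : CycInt) : (p.add q).ev = p.ev + q.ev := by
  simp only [ev, add]
  push_cast
  ring

theorem ev_smul (n : ℤ) (p : CycInt) : (p.smul n).ev = n * p.ev := by
  simp only [ev, smul]
  push_cast
  ring

open Polynomial in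
theorem ev_eq_zero (p : CycInt) (h : p.ev = 0) : p = ⟨0, 0, 0, 0⟩ := by
  obtain ⟨a, b, c, d⟩ := p
  set P : ℤ[X] := C a + C b * X + C c * X ^ 2 + C d * X ^ 3 with hP
  have h0 : aeval zeta5 P = 0 := by
    simpa [hP, ev] using h
  have hdvd : minpoly ℤ zeta5 ∣ P :=
    minpoly.isIntegrallyClosed_dvd (zeta5_prim.isIntegral (by norm_num)) h0
  rw [← cyclotomic_eq_minpoly zeta5_prim (by norm_num)] at hdvd
  have hz : P = 0 := by
    by_contra hne
    have h1 := natDegree_le_of_dvd hdvd hne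
    rw [natDegree_cyclotomic] at h1
    have h2 : P.natDegree ≤ 3 := by rw [hP]; compute_degree
    have : Nat.totient 5 = 4 := by decide
    omega
  have e0 := congrArg (fun q => q.coeff 0) hz
  have e1 := congrArg (fun q => q.coeff 1) hz
  have e2 := congrArg (fun q => q.coeff 2) hz
  have e3 := congrArg (fun q => q.coeff 3) hz
  simp [hP, coeff_X, coeff_X_pow] at e0 e1 e2 e3
  have f1 : b = 0 := by simpa [e0] using e1
  have f2 : c = 0 := by simpa [e0, f1] using e2
  have f3 : d = 0 := by simpa [e0, f1] using e3
  simp [e0, f1, f2, f3]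

theorem ev_inj {p q : CycInt} (h : p.ev = q.ev) : p = q := by
  have := ev_eq_zero (p.add (q.smul (-1))) (by rw [ev_add, ev_smul, h]; push_cast; ring)
  obtain ⟨a, b, c, d⟩ := p
  obtain ⟨a', b', c', d'⟩ := q
  simp only [add, smul, mk.injEq] at this ⊢
  omega

end CycInt

theorem CycMat.ev_mul {m n k : CycMat} (h : m.mul n = k.smul 5) : m.ev * n.ev = k.ev := by
  simp only [CycMat.mul, CycMat.smul, CycMat.mk.injEq] at h
  obtain ⟨h1, h2, h3, h4⟩ := h
  replace h1 := congrArg CycInt.ev h1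
  replace h2 := congrArg CycInt.ev h2
  replace h3 := congrArg CycInt.ev h3
  replace h4 := congrArg CycInt.ev h4
  simp only [CycInt.ev_add, CycInt.ev_mul, CycInt.ev_smul] at h1 h2 h3 h4
  push_cast at h1 h2 h3 h4
  ext i j
  fin_cases i <;> fin_cases j <;> simp [CycMat.ev, Matrix.mul_apply, Fin.sum_univ_three]
  · linear_combination h1 / 25
  · linear_combination h2 / 25
  · linear_combination h3 / 25
  · linear_combination h4 / 25

theorem CycMat.ev_inj {m n : CycMat} (h : m.ev = n.ev) : m = n := by
  have h1 := congrFun (congrFun h 0) 0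
  have h2 := congrFun (congrFun h 0) 1
  have h3 := congrFun (congrFun h 1) 0
  have h4 := congrFun (congrFun h 1) 1
  simp [CycMat.ev] at h1 h2 h3 h4
  obtain ⟨x, y, z, w⟩ := m
  obtain ⟨x', y', z', w'⟩ := n
  simp only [CycMat.mk.injEq]
  exact ⟨CycInt.ev_inj h1, CycInt.ev_inj h2, CycInt.ev_inj h3, CycInt.ev_inj h4⟩

def weil (g : SL25) : Matrix (Fin 3) (Fin 3) ℂ :=
  (weilZ (g.1 0 0) (g.1 0 1) (g.1 1 0) (g.1 1 1)).ev

def gS : SL25 := ⟨!![0, 4; 1, 0], by decide +kernel⟩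
def gT : SL25 := ⟨!![1, 1; 0, 1], by decide +kernel⟩
def gA : SL25 := ⟨!![4, 4; 0, 4], by decide +kernel⟩
def gB : SL25 := ⟨!![2, 0; 0, 3], by decide +kernel⟩
def gC : SL25 := ⟨!![0, 3; 3, 0], by decide +kernel⟩

theorem SL25_det (g : SL25) : g.1 0 0 * g.1 1 1 - g.1 0 1 * g.1 1 0 = 1 := by
  have := g.2
  rwa [Matrix.det_fin_two] at this

theorem weil_S (g : SL25) : weil (gS * g) = weil gS * weil g := by
  refine (CycMat.ev_mul ?_).symm
  have := weilZ_w _ _ _ _ (SL25_det g)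
  have h4 : (4 : ZMod 5) = -1 := by decide
  rw [Matrix.SpecialLinearGroup.coe_mul]
  simpa [gS, Matrix.mul_apply, Fin.sum_univ_two, h4] using this

theorem weil_T (g : SL25) : weil (gT * g) = weil gT * weil g := by
  refine (CycMat.ev_mul ?_).symm
  have := weilZ_t _ _ _ _ (SL25_det g)
  rw [Matrix.SpecialLinearGroup.coe_mul]
  simpa [gT, Matrix.mul_apply, Fin.sum_univ_two] using this

theorem gT_pow (n : ℕ) : (gT ^ n).1 = !![1, (n : ZMod 5); 0, 1] := by
  induction n with
  | zero => ext i j; fin_cases i <;> fin_cases j <;> simp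
  | succ n ih =>
    rw [pow_succ, Matrix.SpecialLinearGroup.coe_mul, ih]
    ext i j
    fin_cases i <;> fin_cases j <;> simp [gT, Matrix.mul_apply, Fin.sum_univ_two, add_comm]

/-- Every element with nonzero lower left entry is a word in `gS`, `gT`. -/
theorem big_cell (g : SL25) (h : g.1 1 0 ≠ 0) :
    g = gT ^ ((g.1 0 0 - 1) * (g.1 1 0) ^ 3).val * gS * gT ^ (-(g.1 1 0)).val * gS * gS * gS *
      gT ^ ((g.1 1 1 - 1) * (g.1 1 0) ^ 3).val := by
  apply Subtype.ext
  have hd := SL25_det g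
  simp only [Matrix.SpecialLinearGroup.coe_mul, gT_pow, ZMod.natCast_val, ZMod.cast_id', id]
  rw [Matrix.eta_fin_two g.1]
  generalize g.1 0 0 = a at *
  generalize g.1 0 1 = b at *
  generalize g.1 1 0 = c at *
  generalize g.1 1 1 = d at *
  revert a b c d
  simp only [gS, Matrix.mul_fin_two]
  decide +kernel

theorem mem_of_gens (K : Submonoid SL25) (hS : gS ∈ K) (hT : gT ∈ K) (g : SL25) : g ∈ K := by
  have key : ∀ g : SL25, g.1 1 0 ≠ 0 → g ∈ K := by
    intro g h
    rw [big_cell g h]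
    exact K.mul_mem (K.mul_mem (K.mul_mem (K.mul_mem (K.mul_mem (K.mul_mem (K.pow_mem hT _) hS)
      (K.pow_mem hT _)) hS) hS) hS) (K.pow_mem hT _)
  by_cases h : g.1 1 0 = 0
  · have h1 : (gS * g) ∈ K := by
      apply key
      have hd := SL25_det g
      intro h2
      rw [Matrix.SpecialLinearGroup.coe_mul] at h2
      have h2' : g.1 0 0 = 0 := by
        simpa [gS, Matrix.mul_apply, Fin.sum_univ_two] using h2
      rw [h, h2'] at hd
      rw [zero_mul, mul_zero, sub_zero] at hd
      exact absurd hd (by decide)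
    have hs4 : gS ^ 4 = 1 := by decide +kernel
    have : g = gS ^ 3 * (gS * g) := by
      rw [← mul_assoc, ← pow_succ, hs4, one_mul]
    rw [this]
    exact K.mul_mem (K.pow_mem hS _) h1
  · exact key g h

theorem weil_one : weil 1 = 1 := by
  have : weilZ 1 0 0 1 = ⟨⟨5, 0, 0, 0⟩, ⟨0, 0, 0, 0⟩, ⟨0, 0, 0, 0⟩, ⟨5, 0, 0, 0⟩⟩ := by
    decide +kernel
  simp only [weil, Matrix.SpecialLinearGroup.coe_one]
  simp [this, CycMat.ev, CycInt.ev]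
  ext i j
  fin_cases i <;> fin_cases j <;> simp

theorem weil_mul (g h : SL25) : weil (g * h) = weil g * weil h := by
  let K : Submonoid SL25 :=
    { carrier := {x | ∀ y, weil (x * y) = weil x * weil y}
      one_mem' := by
        intro y
        rw [one_mul, weil_one, one_mul]
      mul_mem' := by
        intro a b ha hb y
        rw [mul_assoc, ha, hb, ha b, mul_assoc] }
  exact mem_of_gens K weil_S weil_T g h

def weilHom : SL25 →* GL (Fin 3) ℂ :=
  MonoidHom.toHomUnits { toFun := weil, map_one' := weil_one, map_mul' := weil_mul }

theorem weilHom_coe (g : SL25) : (weilHom g : Matrix (Fin 3) (Fin 3) ℂ) = weil g := rfl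

theorem weilHom_injective : Function.Injective weilHom := by
  rw [injective_iff_map_eq_one]
  intro g hg
  have h1 : weil g = weil 1 := by
    rw [← weilHom_coe, hg, weil_one]; rfl
  have h2 := CycMat.ev_inj h1
  obtain ⟨ha, hb, hc, hd⟩ := weilZ_inj _ _ _ _ (SL25_det g) (by simpa using h2)
  ext i j
  fin_cases i <;> fin_cases j <;> simp [ha, hb, hc, hd]

theorem card_SL25 : Nat.card SL25 = 120 := by
  rw [← card_aux, ← Nat.card_eq_fintype_card]
  refine Nat.card_congr
    { toFun := fun g => ⟨(g.1 0 0, g.1 0 1, g.1 1 0, g.1 1 1), SL25_det g⟩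
      invFun := fun p => ⟨!![p.1.1, p.1.2.1; p.1.2.2.1, p.1.2.2.2], by
        rw [Matrix.det_fin_two]; exact p.2⟩
      left_inv := fun g => by
        apply Subtype.ext
        exact (Matrix.eta_fin_two g.1).symm
      right_inv := fun p => by
        apply Subtype.ext
        rfl }

theorem zeta5_inv : zeta5⁻¹ = zeta5 ^ 4 :=
  inv_eq_of_mul_eq_one_right (by rw [← pow_succ', zeta5_five])

theorem sqrt5_sq : sqrt5 * sqrt5 = 5 := by
  unfold sqrt5
  linear_combination (zeta5^4 - 3 * zeta5^3 + 2*zeta5^2 + 4 * zeta5 - 4 - 1 +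
    zeta5 * (1 - zeta5)) * zeta5_sum

theorem sqrt5_inv : sqrt5⁻¹ = sqrt5 / 5 := 
  inv_eq_of_mul_eq_one_right (by linear_combination sqrt5_sq / 5)

theorem diff_inv : (zeta5 ^ 2 - zeta5 ^ 3)⁻¹ = (-1 - 2 * zeta5 - 3 * zeta5 ^ 2 + zeta5 ^ 3) / 5 := by
  apply inv_eq_of_mul_eq_one_right
  have := zeta5_sum
  grind

theorem weil_S_eq : weil gS = sigma := by
  have h : weilZ 0 4 1 0 = ⟨⟨1, 2, 3, -1⟩, ⟨-2, -4, -1, -3⟩, ⟨-2, -4, -1, -3⟩, ⟨-1, -2, -3, 1⟩⟩ := by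
    decide +kernel
  have hz := zeta5_sum
  ext i j
  fin_cases i <;> fin_cases j <;>
    simp [weil, gS, sigma, h, CycMat.ev, CycInt.ev, div_eq_mul_inv, sqrt5_inv] <;>
    simp only [sqrt5] <;> grind

theorem weil_T_eq : weil gT = rho := by
  have h : weilZ 1 1 0 1 = ⟨⟨0, 0, 0, 5⟩, ⟨0, 0, 0, 0⟩, ⟨0, 0, 0, 0⟩, ⟨0, 0, 5, 0⟩⟩ := by
    decide +kernel
  ext i j
  fin_cases i <;> fin_cases j <;> simp [weil, gT, rho, h, CycMat.ev, CycInt.ev]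

theorem weil_A_eq : weil gA = alpha' := by
  have h : weilZ 4 4 0 4 = ⟨⟨0, 0, 0, -5⟩, ⟨0, 0, 0, 0⟩, ⟨0, 0, 0, 0⟩, ⟨0, 0, -5, 0⟩⟩ := by
    decide +kernel
  ext i j
  fin_cases i <;> fin_cases j <;>
    simp [weil, gA, alpha', alpha, emb, h, CycMat.ev, CycInt.ev] <;> ring

theorem weil_B_eq : weil gB = beta' := by
  have h : weilZ 2 0 0 3 = ⟨⟨0, 0, 0, 0⟩, ⟨5, 0, 0, 0⟩, ⟨-5, 0, 0, 0⟩, ⟨0, 0, 0, 0⟩⟩ := by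
    decide +kernel
  ext i j
  fin_cases i <;> fin_cases j <;>
    simp [weil, gB, beta', beta, emb, h, CycMat.ev, CycInt.ev]

theorem weil_C_eq : weil gC = gamma' := by
  have h : weilZ 0 3 3 0 = ⟨⟨-2, -4, -1, -3⟩, ⟨-1, -2, -3, 1⟩, ⟨-1, -2, -3, 1⟩, ⟨2, 4, 1, 3⟩⟩ := by
    decide +kernel
  have hz := zeta5_sum
  ext i j
  fin_cases i <;> fin_cases j <;>
    simp [weil, gC, gamma', gamma, emb, h, CycMat.ev, CycInt.ev, diff_inv, zeta5_inv] <;> grind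

/-- The scalar part `k ↦ diag(ζ^k, ζ^k, 1)`. -/
def scal (k : ℕ) : Matrix (Fin 3) (Fin 3) ℂ :=
  Matrix.diagonal ![zeta5 ^ k, zeta5 ^ k, 1]

theorem scal_add (k l : ℕ) : scal (k + l) = scal k * scal l := by
  simp only [scal, Matrix.diagonal_mul_diagonal]
  congr 1
  ext i
  fin_cases i <;> simp [pow_add]

theorem scal_mod (k : ℕ) : scal (k % 5) = scal k := by
  unfold scal
  rw [← pow_eq_pow_mod k zeta5_five]

theorem scal_zero : scal 0 = 1 := by
  ext i j
  fin_cases i <;> fin_cases j <;> simp [scal]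

def scalHom : Multiplicative (ZMod 5) →* GL (Fin 3) ℂ :=
  MonoidHom.toHomUnits
    { toFun := fun k => scal (Multiplicative.toAdd k).val
      map_one' := scal_zero
      map_mul' := fun k l => by
        rw [toAdd_mul, ZMod.val_add, scal_mod, scal_add] }

theorem scalHom_coe (k : Multiplicative (ZMod 5)) :
    (scalHom k : Matrix (Fin 3) (Fin 3) ℂ) = scal (Multiplicative.toAdd k).val := rfl

theorem commutes (g : SL25) (k : Multiplicative (ZMod 5)) : Commute (weilHom g) (scalHom k) := by
  apply Units.ext
  simp only [Units.val_mul, weilHom_coe, scalHom_coe, weil, CycMat.ev, scal]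
  ext i j
  rw [Matrix.mul_diagonal, Matrix.diagonal_mul]
  fin_cases i <;> fin_cases j <;> simp [mul_comm]

theorem scalHom_injective : Function.Injective scalHom := by
  intro k l h
  have h1 := congrArg (fun u : GL (Fin 3) ℂ => (u : Matrix (Fin 3) (Fin 3) ℂ) 0 0) h
  simp [scalHom_coe, scal] at h1
  have h2 := zeta5_prim.pow_inj (ZMod.val_lt _) (ZMod.val_lt _) h1
  exact Multiplicative.toAdd.injective (ZMod.val_injective 5 h2)

theorem range_disjoint : Disjoint weilHom.range scalHom.range := by
  rw [Subgroup.disjoint_def]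
  rintro x ⟨g, rfl⟩ ⟨k, hk⟩
  -- a scalar in the image is central, so `g` is central in `SL(2, 5)`
  have hcen : ∀ y, g * y = y * g := by
    intro y
    apply weilHom_injective
    rw [map_mul, map_mul, ← hk]
    exact (commutes y k).symm.eq
  have hpow : g ^ 2 = 1 := by
    have hS := hcen gS
    have hT := hcen gT
    have key : ∀ a b c d : ZMod 5, a * d - b * c = 1 →
        !![a, b; c, d] * !![0, 4; 1, 0] = !![0, 4; 1, 0] * !![a, b; c, d] →
        !![a, b; c, d] * !![1, 1; 0, 1] = !![1, 1; 0, 1] * !![a, b; c, d] →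
        !![a, b; c, d] * !![a, b; c, d] = 1 := by
      simp only [Matrix.mul_fin_two]
      decide +kernel
    rw [pow_two]
    apply Subtype.ext
    have := key _ _ _ _ (SL25_det g)
    rw [← Matrix.eta_fin_two g.1] at this
    exact this (congrArg Subtype.val hS) (congrArg Subtype.val hT)
  have hk2 : k ^ 2 = 1 := by
    apply scalHom_injective
    rw [map_pow, hk, ← map_pow, hpow, map_one, map_one]
  have hk1 : k = 1 := by
    clear hk
    revert k
    decide
  rw [← hk, hk1, map_one]

theorem mem_gen3 {S : Set (Matrix (Fin 3) (Fin 3) ℂ)} {x : GL (Fin 3) ℂ}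
    (h : (x : Matrix (Fin 3) (Fin 3) ℂ) ∈ S) : x ∈ gen3 S := Subgroup.subset_closure h

theorem weil_range_le (K : Subgroup (GL (Fin 3) ℂ)) (hS : weilHom gS ∈ K)
    (hT : weilHom gT ∈ K) : weilHom.range ≤ K := by
  rintro _ ⟨g, rfl⟩
  exact mem_of_gens (K.comap weilHom).toSubmonoid hS hT g

theorem S21_eq : S21 = weilHom.range := by
  apply le_antisymm
  · unfold S21 gen3
    rw [Subgroup.closure_le]
    rintro x (hx | hx | hx)
    · exact ⟨gA, Units.ext (by rw [hx, weilHom_coe, weil_A_eq])⟩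
    · exact ⟨gB, Units.ext (by rw [hx, weilHom_coe, weil_B_eq])⟩
    · exact ⟨gC, Units.ext (by rw [hx, weilHom_coe, weil_C_eq])⟩
  · have hA : weilHom gA ∈ S21 := mem_gen3 (by simp [weilHom_coe, weil_A_eq])
    have hB : weilHom gB ∈ S21 := mem_gen3 (by simp [weilHom_coe, weil_B_eq])
    have hC : weilHom gC ∈ S21 := mem_gen3 (by simp [weilHom_coe, weil_C_eq])
    apply weil_range_le
    · have : gS = gB ^ 3 * gC := by decide +kernel
      rw [this, map_mul, map_pow]
      exact mul_mem (pow_mem hB _) hC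
    · have : gT = gA * gB ^ 2 := by decide +kernel
      rw [this, map_mul, map_pow]
      exact mul_mem hA (pow_mem hB _)

def gD : Multiplicative (ZMod 5) := Multiplicative.ofAdd 1

theorem scal_range_le (K : Subgroup (GL (Fin 3) ℂ)) (h : scalHom gD ∈ K) :
    scalHom.range ≤ K := by
  rintro _ ⟨k, rfl⟩
  have : k = gD ^ (Multiplicative.toAdd k).val := by revert k; decide +kernel
  rw [this, map_pow]
  exact pow_mem h _

theorem scalHom_gD : (scalHom gD : Matrix (Fin 3) (Fin 3) ℂ) =
    Matrix.diagonal ![zeta5, zeta5, 1] := by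
  rw [scalHom_coe]
  have : (Multiplicative.toAdd gD).val = 1 := by decide +kernel
  rw [this, scal, pow_one]

theorem Dz_eq : Dz = scalHom.range := by
  apply le_antisymm
  · unfold Dz gen3
    rw [Subgroup.closure_le]
    rintro x hx
    exact ⟨gD, Units.ext (by rw [scalHom_gD, hx])⟩
  · exact scal_range_le _ (mem_gen3 (by simp [scalHom_gD]))

theorem tau_eq : ((weilHom gT * scalHom gD ^ 3 : GL (Fin 3) ℂ) : Matrix (Fin 3) (Fin 3) ℂ) =
    tau := by
  rw [Units.val_mul, Units.val_pow_eq_pow_val, scalHom_gD, weilHom_coe, weil_T_eq, rho, tau,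
    Matrix.diagonal_pow, Matrix.diagonal_mul_diagonal]
  have h5 := zeta5_five
  congr 1
  ext i
  fin_cases i <;> simp <;> grind

theorem sup_eq : weilHom.range ⊔ scalHom.range = H := by
  apply le_antisymm
  · have hS : weilHom gS ∈ H := mem_gen3 (by simp [weilHom_coe, weil_S_eq])
    have hT : weilHom gT * scalHom gD ^ 3 ∈ H := mem_gen3 (by rw [tau_eq]; simp)
    -- `(στ)^6 = diag(ζ₅, ζ₅, 1)^18`, and its square is `diag(ζ₅, ζ₅, 1)`
    have hD : scalHom gD ∈ H := by
      have h1 : scalHom gD = (weilHom gS * (weilHom gT * scalHom gD ^ 3)) ^ 12 := by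
        rw [← map_pow, ← mul_assoc, ← map_mul, (commutes _ _).mul_pow, ← map_pow, ← map_pow]
        have e1 : (gS * gT) ^ 12 = 1 := by decide +kernel
        have e2 : (gD ^ 3) ^ 12 = gD := by decide +kernel
        rw [e1, e2, map_one, one_mul]
      rw [h1]
      exact pow_mem (mul_mem hS hT) _
    apply sup_le
    · apply weil_range_le _ hS
      have := mul_mem hT (inv_mem (pow_mem hD 3))
      simpa using this
    · exact scal_range_le _ hD
  · unfold H gen3
    rw [Subgroup.closure_le]
    rintro x (hx | hx)
    · exact Subgroup.mem_sup_left ⟨gS, Units.ext (by rw [hx, weilHom_coe, weil_S_eq])⟩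
    · have : x = weilHom gT * scalHom gD ^ 3 := Units.ext (by rw [hx, tau_eq])
      rw [this]
      exact mul_mem (Subgroup.mem_sup_left ⟨gT, rfl⟩)
        (Subgroup.mem_sup_right (pow_mem (MonoidHom.mem_range.2 ⟨gD, rfl⟩) _))

def prodHom : SL25 × Multiplicative (ZMod 5) →* GL (Fin 3) ℂ :=
  weilHom.noncommCoprod scalHom commutes

theorem prodHom_injective : Function.Injective prodHom :=
  MonoidHom.noncommCoprod_injective weilHom scalHom commutes |>.2
    ⟨weilHom_injective, scalHom_injective, range_disjoint⟩

theorem prodHom_range : prodHom.range = H :=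
  (MonoidHom.noncommCoprod_range weilHom scalHom commutes).trans sup_eq

def isoH : H ≃* SL25 × Multiplicative (ZMod 5) :=
  ((MonoidHom.ofInjective prodHom_injective).trans
    (MulEquiv.subgroupCongr prodHom_range)).symm

theorem stmt10 :
    (∀ a ∈ S21, ∀ b ∈ Dz, a * b = b * a) ∧
    S21 ⊓ Dz = ⊥ ∧
    S21 ⊔ Dz = H ∧
    Nonempty (H ≃* SL25 × Multiplicative (ZMod 5)) ∧
    Nat.card H = 600 := by
  refine ⟨?_, ?_, ?_, ⟨isoH⟩, ?_⟩
  · rw [S21_eq, Dz_eq]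
    rintro _ ⟨g, rfl⟩ _ ⟨k, rfl⟩
    exact commutes g k
  · rw [S21_eq, Dz_eq]
    exact range_disjoint.eq_bot
  · rw [S21_eq, Dz_eq, sup_eq]
  · rw [Nat.card_congr isoH.toEquiv, Nat.card_prod, card_SL25]
    simp
end
end

section
/- The image in PGL(3,ℂ) of the subgroup ⟨σ, τ, λ₃₀⟩ ⊆ GL(3,ℂ) under the canonical projection GL(3,ℂ) → PGL(3,ℂ) is isomorphic to SL(2,5) × ℤ/15 and has order 1800. -/
noncomputable section
open Matrix

/-- The subgroup of nonzero scalar matrices in `GL(3, ℂ)`. -/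
def scalarSub : Subgroup (GL (Fin 3) ℂ) :=
  (Units.map (algebraMap ℂ (Matrix (Fin 3) (Fin 3) ℂ)).toMonoidHom).range

instance : scalarSub.Normal := by
  constructor
  rintro n ⟨c, rfl⟩ g
  refine ⟨c, ?_⟩
  ext
  simp only [Units.coe_map, RingHom.toMonoidHom_eq_coe, MonoidHom.coe_coe, Units.val_mul]
  rw [← Algebra.commutes (↑c : ℂ) (↑g : Matrix (Fin 3) (Fin 3) ℂ), mul_assoc,
    ← Units.val_mul, mul_inv_cancel, Units.val_one, mul_one]

/-- `PGL(3, ℂ)`: the quotient of `GL(3, ℂ)` by the nonzero scalar matrices. -/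
abbrev PGL3 := GL (Fin 3) ℂ ⧸ scalarSub

def lambda30 : Matrix (Fin 3) (Fin 3) ℂ :=
  Matrix.diagonal ![1, 1, Complex.exp (2 * Real.pi * Complex.I / 30)]

/-- `⟨σ, τ, λ₃₀⟩`. -/
def Gt30 : Subgroup (GL (Fin 3) ℂ) := gen3 {sigma, tau, lambda30}


/-! ### A computable model of `ℤ[ζ₅]` -/

namespace W

abbrev Q := ℤ × ℤ × ℤ × ℤ

def qmul (p q : Q) : Q :=
  let x0 := p.1 * q.1
  let x1 := p.1 * q.2.1 + p.2.1 * q.1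
  let x2 := p.1 * q.2.2.1 + p.2.1 * q.2.1 + p.2.2.1 * q.1
  let x3 := p.1 * q.2.2.2 + p.2.1 * q.2.2.1 + p.2.2.1 * q.2.1 + p.2.2.2 * q.1
  let x4 := p.2.1 * q.2.2.2 + p.2.2.1 * q.2.2.1 + p.2.2.2 * q.2.1
  let x5 := p.2.2.1 * q.2.2.2 + p.2.2.2 * q.2.2.1
  let x6 := p.2.2.2 * q.2.2.2
  (x0 - x4 + x5, x1 - x4 + x6, x2 - x4, x3 - x4)

def qadd (p q : Q) : Q :=
  (p.1 + q.1, p.2.1 + q.2.1, p.2.2.1 + q.2.2.1, p.2.2.2 + q.2.2.2)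

def qsub (p q : Q) : Q :=
  (p.1 - q.1, p.2.1 - q.2.1, p.2.2.1 - q.2.2.1, p.2.2.2 - q.2.2.2)

/-- Powers of `ζ₅`. -/
def pw (k : ZMod 5) : Q :=
  if k = 0 then (1, 0, 0, 0) else if k = 1 then (0, 1, 0, 0) else if k = 2 then (0, 0, 1, 0)
  else if k = 3 then (0, 0, 0, 1) else (-1, -1, -1, -1)

def q0 : Q := (0, 0, 0, 0)

/-- `√5`. -/
def qs : Q := (-1, 0, -2, -2)

def leg (a : ZMod 5) : Bool := a = 1 ∨ a = 4

def sgn (b : Bool) (q : Q) : Q := if b then q else qsub q0 q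

/-- `√5` times the kernel of the Weil representation. -/
def N (a b c d x y : ZMod 5) : Q :=
  if c = 0 then
    if y = a * x then sgn (leg a) (qmul qs (pw (3 * a * b * x * x)))
    else if y = - (a * x) then sgn (!leg a) (qmul qs (pw (3 * a * b * x * x)))
    else q0
  else
    sgn (!leg c) (qsub (pw (3 * (c * c * c) * (a * x * x - 2 * x * y + d * y * y)))
      (pw (3 * (c * c * c) * (a * x * x + 2 * x * y + d * y * y))))

def chk (a b c d a' b' c' d' a'' b'' c'' d'' x y : ZMod 5) : Prop :=
  qmul qs (N a'' b'' c'' d'' x y) =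
    qadd (qmul (N a b c d x 1) (N a' b' c' d' 1 y)) (qmul (N a b c d x 3) (N a' b' c' d' 3 y))

instance (a b c d a' b' c' d' a'' b'' c'' d'' x y : ZMod 5) :
    Decidable (chk a b c d a' b' c' d' a'' b'' c'' d'' x y) := by
  unfold chk; infer_instance

def pt (i : Fin 2) : ZMod 5 := if i = 0 then 1 else 3

theorem chkT : ∀ a b c d : ZMod 5, a * d - b * c = 1 → ∀ i j : Fin 2,
    chk 1 1 0 1 a b c d (a + c) (b + d) c d (pt i) (pt j) := by
  decide +kernel

theorem chkS : ∀ a b c d : ZMod 5, a * d - b * c = 1 → ∀ i j : Fin 2,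
    chk 0 (-1) 1 0 a b c d (-c) (-d) a b (pt i) (pt j) := by
  decide +kernel

theorem N_inj : ∀ a b c d : ZMod 5, a * d - b * c = 1 →
    (∀ i j : Fin 2, N a b c d (pt i) (pt j) = if i = j then qs else q0) →
    a = 1 ∧ b = 0 ∧ c = 0 ∧ d = 1 := by
  decide +kernel

theorem N_one : ∀ i j : Fin 2, N 1 0 0 1 (pt i) (pt j) = if i = j then qs else q0 := by
  decide +kernel

/-! ### Evaluation in `ℂ` -/

theorem zprim : IsPrimitiveRoot zeta5 5 := by
  have := Complex.isPrimitiveRoot_exp 5 (by norm_num)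
  simpa [zeta5] using this

theorem zsum : 1 + zeta5 + zeta5 ^ 2 + zeta5 ^ 3 + zeta5 ^ 4 = 0 := by
  have := zprim.geom_sum_eq_zero (by norm_num)
  simpa [Finset.sum_range_succ] using this

theorem zfive : zeta5 ^ 5 = 1 := zprim.pow_eq_one

theorem z4 : zeta5 ^ 4 = -1 - zeta5 - zeta5 ^ 2 - zeta5 ^ 3 := by
  linear_combination zsum

theorem sqrt5_sq : sqrt5 * sqrt5 = 5 := by
  have h := zsum
  unfold sqrt5
  generalize zeta5 = z at *
  grind

theorem sqrt5_ne : sqrt5 ≠ 0 := by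
  intro h
  have := sqrt5_sq
  rw [h] at this
  norm_num at this

def ev (q : Q) : ℂ := q.1 + q.2.1 * zeta5 + q.2.2.1 * zeta5 ^ 2 + q.2.2.2 * zeta5 ^ 3

theorem ev_mul (p q : Q) : ev (qmul p q) = ev p * ev q := by
  obtain ⟨a, b, c, d⟩ := p
  obtain ⟨a', b', c', d'⟩ := q
  simp only [ev, qmul]
  push_cast
  have h := z4
  have h5 := zfive
  have h6 : zeta5 ^ 6 = zeta5 := by rw [pow_succ, h5, one_mul]
  linear_combination (-(b * d' + c * c' + d * b' : ℂ)) * h - (c * d' + d * c' : ℂ) * h5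
    - (d * d' : ℂ) * h6

theorem ev_add (p q : Q) : ev (qadd p q) = ev p + ev q := by
  simp only [ev, qadd]; push_cast; ring

theorem ev_q0 : ev q0 = 0 := by simp [ev, q0]

theorem ev_qs : ev qs = sqrt5 := by
  simp only [ev, qs, sqrt5]; push_cast; linear_combination -zsum

theorem ev_eq_zero {q : Q} (h : ev q = 0) : q = 0 := by
  obtain ⟨a, b, c, d⟩ := q
  let p : Polynomial ℚ := Polynomial.C (a : ℚ) + Polynomial.C (b : ℚ) * Polynomial.X
    + Polynomial.C (c : ℚ) * Polynomial.X ^ 2 + Polynomial.C (d : ℚ) * Polynomial.X ^ 3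
  have hp : Polynomial.aeval zeta5 p = 0 := by
    simpa [p, ev] using h
  have hdeg : p.natDegree ≤ 3 := by
    simp only [p]; compute_degree
  have hp0 : p = 0 := by
    by_contra hne
    have h1 := Polynomial.natDegree_le_of_dvd (minpoly.dvd ℚ zeta5 hp) hne
    rw [← Polynomial.cyclotomic_eq_minpoly_rat zprim (by norm_num),
      Polynomial.natDegree_cyclotomic] at h1
    have h2 : Nat.totient 5 = 4 := by decide
    omega
  have e0 := congrArg (fun r => Polynomial.coeff r 0) hp0
  have e1 := congrArg (fun r => Polynomial.coeff r 1) hp0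
  have e2 := congrArg (fun r => Polynomial.coeff r 2) hp0
  have e3 := congrArg (fun r => Polynomial.coeff r 3) hp0
  simp [p, Polynomial.coeff_X, Polynomial.coeff_X_pow, Polynomial.coeff_C, -map_intCast] at e0 e1 e2 e3
  simp [e0, e1, e2, e3]

theorem ev_inj {p q : Q} (h : ev p = ev q) : p = q := by
  have h2 : ev (p - q) = 0 := by
    simp only [ev, Prod.fst_sub, Prod.snd_sub] at h ⊢
    push_cast
    linear_combination h
  exact sub_eq_zero.1 (ev_eq_zero h2)

/-! ### Generators of `SL(2,5)` -/

def T : SL25 := ⟨!![1, 1; 0, 1], by simp [Matrix.det_fin_two]⟩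
def S : SL25 := ⟨!![0, -1; 1, 0], by simp [Matrix.det_fin_two]⟩

theorem det_eq (g : SL25) : g.1 0 0 * g.1 1 1 - g.1 0 1 * g.1 1 0 = 1 := by
  have := g.2; rwa [Matrix.det_fin_two] at this

theorem T_mul (g : SL25) : (T * g).1 =
    !![g.1 0 0 + g.1 1 0, g.1 0 1 + g.1 1 1; g.1 1 0, g.1 1 1] := by
  rw [Matrix.SpecialLinearGroup.coe_mul]
  ext i j
  fin_cases i <;> fin_cases j <;>
    simp [T, Matrix.mul_apply, Fin.sum_univ_two]

theorem S_mul (g : SL25) : (S * g).1 =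
    !![- g.1 1 0, - g.1 1 1; g.1 0 0, g.1 0 1] := by
  rw [Matrix.SpecialLinearGroup.coe_mul]
  ext i j
  fin_cases i <;> fin_cases j <;>
    simp [S, Matrix.mul_apply, Fin.sum_univ_two]

theorem T_pow (n : ℕ) : (T ^ n).1 = !![1, (n : ZMod 5); 0, 1] := by
  induction n with
  | zero => ext i j; fin_cases i <;> fin_cases j <;> simp
  | succ n ih =>
    rw [pow_succ', T_mul, ih]
    simp [add_comm]

theorem decomp (g : SL25) (hc : g.1 1 0 ≠ 0) :
    ∃ i j k : ℕ, g = T ^ i * (S * (T ^ j * (S * (S * (S * T ^ k))))) := by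
  have hd := det_eq g
  have : Fact (Nat.Prime 5) := ⟨by norm_num⟩
  refine ⟨((g.1 0 0 - 1) * (g.1 1 0)⁻¹).val, (- g.1 1 0).val,
    ((g.1 1 1 - 1) * (g.1 1 0)⁻¹).val, ?_⟩
  apply Subtype.ext
  rw [Matrix.SpecialLinearGroup.coe_mul, S_mul, Matrix.SpecialLinearGroup.coe_mul, S_mul, S_mul,
    S_mul, T_pow, T_pow, T_pow]
  simp only [ZMod.natCast_val, ZMod.cast_id', id]
  ext i j
  fin_cases i <;> fin_cases j <;> simp [Matrix.mul_apply, Fin.sum_univ_two] <;> field_simp <;> grind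

theorem gen_induction {P : SL25 → Prop} (hS : P S) (hT : P T) (hm : ∀ g h, P g → P h → P (g * h))
    (g : SL25) : P g := by
  have S4 : S * (S * (S * S)) = 1 := by decide
  have h1 : P 1 := by rw [← S4]; exact hm _ _ hS (hm _ _ hS (hm _ _ hS hS))
  have hp : ∀ n : ℕ, P (T ^ n) := by
    intro n
    induction n with
    | zero => simpa using h1
    | succ n ih => rw [pow_succ]; exact hm _ _ ih hT
  have key : ∀ g : SL25, g.1 1 0 ≠ 0 → P g := by
    intro g hg
    obtain ⟨i, j, k, rfl⟩ := decomp g hg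
    exact hm _ _ (hp _) (hm _ _ hS (hm _ _ (hp _) (hm _ _ hS (hm _ _ hS (hm _ _ hS (hp _))))))
  by_cases hc : g.1 1 0 = 0
  · have hg : g = S * (S * (S * (S * g))) := by
      have : S * (S * (S * (S * g))) = (S * (S * (S * S))) * g := by simp only [mul_assoc]
      rw [this, S4, one_mul]
    rw [hg]
    refine hm _ _ hS (hm _ _ hS (hm _ _ hS (key _ ?_)))
    rw [S_mul]
    intro h0
    have := det_eq g
    simp at h0
    rw [hc, h0] at this
    rw [zero_mul, mul_zero, sub_zero] at this
    exact absurd this (by decide)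
  · exact key g hc

/-! ### The Weil representation -/

def f (g : SL25) : Matrix (Fin 2) (Fin 2) ℂ :=
  Matrix.of fun i j => sqrt5⁻¹ * ev (N (g.1 0 0) (g.1 0 1) (g.1 1 0) (g.1 1 1) (pt i) (pt j))

theorem f_of_chk (g h k : SL25)
    (H : ∀ i j : Fin 2, chk (g.1 0 0) (g.1 0 1) (g.1 1 0) (g.1 1 1)
      (h.1 0 0) (h.1 0 1) (h.1 1 0) (h.1 1 1)
      (k.1 0 0) (k.1 0 1) (k.1 1 0) (k.1 1 1) (pt i) (pt j)) : f k = f g * f h := by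
  ext i j
  have := congrArg ev (H i j)
  rw [ev_mul, ev_add, ev_mul, ev_mul, ev_qs] at this
  simp only [f, Matrix.mul_apply, Fin.sum_univ_two, Matrix.of_apply]
  have p0 : pt 0 = 1 := rfl
  have p1 : pt 1 = 3 := rfl
  rw [p0, p1]
  have h5 := sqrt5_ne
  field_simp
  linear_combination this

theorem f_T_mul (g : SL25) : f (T * g) = f T * f g := by
  apply f_of_chk
  rw [T_mul]
  exact chkT _ _ _ _ (det_eq g)

theorem f_S_mul (g : SL25) : f (S * g) = f S * f g := by
  apply f_of_chk
  rw [S_mul]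
  exact chkS _ _ _ _ (det_eq g)

theorem f_mul (g h : SL25) : f (g * h) = f g * f h := by
  revert h
  induction g using gen_induction with
  | hS => exact f_S_mul
  | hT => exact f_T_mul
  | hm g g' hg hg' =>
    intro h
    rw [mul_assoc, hg, hg', hg, mul_assoc]

theorem f_one : f 1 = 1 := by
  ext i j
  have := N_one i j
  simp only [f, Matrix.of_apply]
  have h : N ((1 : SL25).1 0 0) ((1 : SL25).1 0 1) ((1 : SL25).1 1 0) ((1 : SL25).1 1 1) (pt i) (pt j)
    = N 1 0 0 1 (pt i) (pt j) := rfl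
  rw [h, this, Matrix.one_apply]
  split_ifs
  · rw [ev_qs, inv_mul_cancel₀ sqrt5_ne]
  · rw [ev_q0, mul_zero]

theorem f_inj (g : SL25) (h : f g = 1) : g = 1 := by
  have := N_inj _ _ _ _ (det_eq g) (by
    intro i j
    apply ev_inj
    have h2 := congrFun (congrFun h i) j
    simp only [f, Matrix.of_apply, Matrix.one_apply] at h2
    have h5 := sqrt5_ne
    split_ifs at h2 ⊢
    · rw [ev_qs]; field_simp at h2; exact h2
    · rw [ev_q0]; simpa [h5] using h2)
  obtain ⟨h1, h2, h3, h4⟩ := this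
  apply Subtype.ext
  ext i j
  fin_cases i <;> fin_cases j <;> simp [h1, h2, h3, h4]

theorem f_S : f S = !![(zeta5 - zeta5 ^ 4) / sqrt5, (zeta5 ^ 3 - zeta5 ^ 2) / sqrt5;
    (zeta5 ^ 3 - zeta5 ^ 2) / sqrt5, -((zeta5 - zeta5 ^ 4) / sqrt5)] := by
  have h00 : N 0 (-1) 1 0 (pt 0) (pt 0) = (1, 2, 1, 1) := by decide +kernel
  have h01 : N 0 (-1) 1 0 (pt 0) (pt 1) = (0, 0, -1, 1) := by decide +kernel
  have h10 : N 0 (-1) 1 0 (pt 1) (pt 0) = (0, 0, -1, 1) := by decide +kernel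
  have h11 : N 0 (-1) 1 0 (pt 1) (pt 1) = (-1, -2, -1, -1) := by decide +kernel
  ext i j
  have hz := z4
  fin_cases i <;> fin_cases j <;>
    simp [f, S, h00, h01, h10, h11, ev] <;>
    (try rw [hz]) <;> rw [div_eq_inv_mul] <;> ring

theorem f_T : f T = !![zeta5 ^ 3, 0; 0, zeta5 ^ 2] := by
  have h00 : N 1 1 0 1 (pt 0) (pt 0) = qmul qs (0, 0, 0, 1) := by decide +kernel
  have h01 : N 1 1 0 1 (pt 0) (pt 1) = q0 := by decide +kernel
  have h10 : N 1 1 0 1 (pt 1) (pt 0) = q0 := by decide +kernel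
  have h11 : N 1 1 0 1 (pt 1) (pt 1) = qmul qs (0, 0, 1, 0) := by decide +kernel
  have h5 := sqrt5_ne
  ext i j
  fin_cases i <;> fin_cases j <;>
    simp [f, T, h00, h01, h10, h11, ev_mul, ev_qs, ev_q0, h5] <;> simp [ev]

theorem f_det (g : SL25) : (f g).det = 1 := by
  induction g using gen_induction with
  | hS =>
    rw [f_S, Matrix.det_fin_two_of]
    have h5 := sqrt5_ne
    have hs := sqrt5_sq
    have hz := zsum
    field_simp
    rw [pow_two sqrt5, hs]
    generalize zeta5 = z at *
    grind
  | hT =>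
    rw [f_T, Matrix.det_fin_two_of]
    linear_combination zfive
  | hm g h hg hh => rw [f_mul, Matrix.det_mul, hg, hh, one_mul]

/-! ### The fifteenth roots of unity -/

def om : ℂ := Complex.exp (2 * Real.pi * Complex.I * (7 / 15))

theorem om_prim : IsPrimitiveRoot om 15 := by
  have := Complex.isPrimitiveRoot_exp_of_coprime 7 15 (by norm_num) (by norm_num)
  simpa [om] using this

theorem om_pow9 : om ^ 9 = zeta5 := by
  rw [om, zeta5, ← Complex.exp_nat_mul, Complex.exp_eq_exp_iff_exists_int]
  exact ⟨4, by push_cast; ring⟩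

theorem om_mul : om * Complex.exp (2 * Real.pi * Complex.I / 30) = -1 := by
  rw [om, ← Complex.exp_add, ← Complex.exp_pi_mul_I]
  congr 1
  ring

theorem om_val_add (a b : ZMod 15) : om ^ (a + b).val = om ^ a.val * om ^ b.val := by
  have h := pow_mod_orderOf om (a.val + b.val)
  rw [← om_prim.eq_orderOf] at h
  rw [ZMod.val_add, ← pow_add, h]

/-! ### The homomorphism to `PGL(3)` -/

theorem emb_mul (A B : Matrix (Fin 2) (Fin 2) ℂ) : emb (A * B) = emb A * emb B := by
  ext i j
  fin_cases i <;> fin_cases j <;>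
    simp [emb, Matrix.mul_apply, Fin.sum_univ_two, Fin.sum_univ_three]

theorem emb_one : emb 1 = 1 := by
  ext i j
  fin_cases i <;> fin_cases j <;> simp [emb]

def psi : SL25 × Multiplicative (ZMod 15) →* Matrix (Fin 3) (Fin 3) ℂ where
  toFun p := emb (om ^ (Multiplicative.toAdd p.2).val • f p.1)
  map_one' := by simp [f_one, emb_one]
  map_mul' p q := by
    rw [← emb_mul, Prod.fst_mul, Prod.snd_mul, toAdd_mul, om_val_add, f_mul, smul_mul_smul_comm]

def theta : SL25 × Multiplicative (ZMod 15) →* PGL3 :=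
  (QuotientGroup.mk' scalarSub).comp psi.toHomUnits

theorem theta_inj : Function.Injective theta := by
  rw [injective_iff_map_eq_one]
  rintro ⟨g, k⟩ h
  have h : (psi.toHomUnits (g, k)) ∈ scalarSub := (QuotientGroup.eq_one_iff _).1 h
  obtain ⟨c, hc⟩ := h
  have hc := congrArg Units.val hc
  have hc : algebraMap ℂ (Matrix (Fin 3) (Fin 3) ℂ) c
    = emb (om ^ (Multiplicative.toAdd k).val • f g) := hc
  have hE : ∀ i j, algebraMap ℂ (Matrix (Fin 3) (Fin 3) ℂ) c i j
    = emb (om ^ (Multiplicative.toAdd k).val • f g) i j := by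
      intro i j; rw [hc]
  have c1 : (c : ℂ) = 1 := by
    simpa [emb, Matrix.algebraMap_matrix_apply] using hE 2 2
  have hA : om ^ (Multiplicative.toAdd k).val • f g = 1 := by
    ext i j
    have e00 := hE 0 0
    have e01 := hE 0 1
    have e10 := hE 1 0
    have e11 := hE 1 1
    simp [emb, Matrix.algebraMap_matrix_apply, c1] at e00 e01 e10 e11
    fin_cases i <;> fin_cases j <;> simp [e00, e01, e10, e11] <;> grind
  have hdet := congrArg Matrix.det hA
  rw [Matrix.det_smul, f_det, Matrix.det_one, mul_one, Fintype.card_fin, ← pow_mul,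
    om_prim.pow_eq_one_iff_dvd] at hdet
  have hlt := ZMod.val_lt (Multiplicative.toAdd k)
  have hk : (Multiplicative.toAdd k).val = 0 := by omega
  rw [hk, pow_zero, one_smul] at hA
  have hg := f_inj g hA
  have hk' : Multiplicative.toAdd k = 0 := (ZMod.val_eq_zero _).1 hk
  rw [hg, show k = 1 from hk']
  rfl

theorem theta_of (p : SL25 × Multiplicative (ZMod 15)) (u : GL (Fin 3) ℂ) (c : ℂˣ)
    (h : (u : Matrix (Fin 3) (Fin 3) ℂ) = (c : ℂ) • psi p) :
    QuotientGroup.mk' scalarSub u = theta p := by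
  have : u = Units.map (algebraMap ℂ (Matrix (Fin 3) (Fin 3) ℂ)).toMonoidHom c
      * psi.toHomUnits p := by
    ext1
    rw [h, Units.val_mul]
    exact Algebra.smul_def _ _
  rw [this, map_mul]
  have h1 : QuotientGroup.mk' scalarSub
      (Units.map (algebraMap ℂ (Matrix (Fin 3) (Fin 3) ℂ)).toMonoidHom c) = 1 :=
    (QuotientGroup.eq_one_iff _).2 ⟨c, rfl⟩
  rw [h1, one_mul]
  rfl

def w (n : ZMod 15) : Multiplicative (ZMod 15) := Multiplicative.ofAdd n

theorem psi_S : psi (S, 1) = sigma := by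
  change emb (om ^ (0 : ZMod 15).val • f S) = sigma
  rw [ZMod.val_zero, pow_zero, one_smul, f_S]
  ext i j
  fin_cases i <;> fin_cases j <;> simp [emb, sigma]

theorem psi_T : psi (T, w 12) = tau := by
  change emb (om ^ 12 • f T) = tau
  have h27 : om ^ 12 = zeta5 ^ 3 := by
    rw [← om_pow9]
    have := om_prim.pow_eq_one
    linear_combination (-om ^ 12) * this
  have h5 := zfive
  rw [f_T, h27]
  ext i j
  fin_cases i <;> fin_cases j <;> simp [emb, tau] <;> grind

theorem S_sq : f (S * S) = -1 := by
  have h : N 4 0 0 4 (pt 0) (pt 0) = qmul qs (-1, 0, 0, 0) := by decide +kernel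
  have h01 : N 4 0 0 4 (pt 0) (pt 1) = q0 := by decide +kernel
  have h10 : N 4 0 0 4 (pt 1) (pt 0) = q0 := by decide +kernel
  have h11 : N 4 0 0 4 (pt 1) (pt 1) = qmul qs (-1, 0, 0, 0) := by decide +kernel
  have hS : (S * S).1 = !![4, 0; 0, 4] := by decide
  have h5 := sqrt5_ne
  ext i j
  simp only [f, hS]
  fin_cases i <;> fin_cases j <;>
    simp [h, h01, h10, h11, ev_mul, ev_qs, ev_q0, h5] <;> simp [ev]

theorem psi_L : lambda30 =
    Complex.exp (2 * Real.pi * Complex.I / 30) • psi (S * S, w 1) := by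
  change _ = _ • emb (om ^ 1 • f (S * S))
  have h := om_mul
  rw [S_sq, lambda30]
  generalize Complex.exp (2 * Real.pi * Complex.I / 30) = e at *
  ext i j
  fin_cases i <;> fin_cases j <;> simp [emb] <;> grind

theorem mem_of (A : Matrix (Fin 3) (Fin 3) ℂ) (hA : A ∈ ({sigma, tau, lambda30} : Set _))
    (p : SL25 × Multiplicative (ZMod 15)) (c : ℂˣ) (h : A = (c : ℂ) • psi p) :
    theta p ∈ Gt30.map (QuotientGroup.mk' scalarSub) := by
  let u : GL (Fin 3) ℂ := Units.map (algebraMap ℂ (Matrix (Fin 3) (Fin 3) ℂ)).toMonoidHom c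
      * psi.toHomUnits p
  have hu : (u : Matrix (Fin 3) (Fin 3) ℂ) = A := by
    rw [h]; exact (Algebra.smul_def _ _).symm
  refine ⟨u, Subgroup.subset_closure ?_, theta_of p u c (hu.trans h)⟩
  change (u : Matrix (Fin 3) (Fin 3) ℂ) ∈ ({sigma, tau, lambda30} : Set (Matrix (Fin 3) (Fin 3) ℂ))
  rw [hu]; exact hA

def eU : ℂˣ := Units.mk0 (Complex.exp (2 * Real.pi * Complex.I / 30)) (Complex.exp_ne_zero _)

theorem range_theta : theta.range = Gt30.map (QuotientGroup.mk' scalarSub) := by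
  apply le_antisymm
  · have mS := mem_of sigma (by simp) (S, 1) 1 (by simp [psi_S])
    have mT := mem_of tau (by simp) (T, w 12) 1 (by simp [psi_T])
    have mL := mem_of lambda30 (by simp) (S * S, w 1) eU psi_L
    set K := Gt30.map (QuotientGroup.mk' scalarSub)
    have m1 : theta (1, w 1) ∈ K := by
      have : ((1, w 1) : SL25 × Multiplicative (ZMod 15)) = (S, 1) * (S, 1) * (S * S, w 1) := by
        decide
      rw [this, map_mul, map_mul]
      exact K.mul_mem (K.mul_mem mS mS) mL
    have mw : ∀ n : Multiplicative (ZMod 15), theta (1, n) ∈ K := by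
      intro n
      have : ((1, n) : SL25 × Multiplicative (ZMod 15)) = (1, w 1) ^ (Multiplicative.toAdd n).val := by
        rw [Prod.pow_mk, one_pow, w, ← ofAdd_nsmul]
        simp
      rw [this, map_pow]
      exact K.pow_mem m1 _
    have mg : ∀ g : SL25, theta (g, 1) ∈ K := by
      intro g
      induction g using gen_induction with
      | hS => exact mS
      | hT =>
        have : ((T, 1) : SL25 × Multiplicative (ZMod 15)) = (T, w 12) * (1, w 3) := by decide
        rw [this, map_mul]
        exact K.mul_mem mT (mw _)
      | hm g h hg hh =>
        have : ((g * h, 1) : SL25 × Multiplicative (ZMod 15)) = (g, 1) * (h, 1) := by simp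
        rw [this, map_mul]
        exact K.mul_mem hg hh
    rintro _ ⟨⟨g, n⟩, rfl⟩
    have : ((g, n) : SL25 × Multiplicative (ZMod 15)) = (g, 1) * (1, n) := by simp
    rw [this, map_mul]
    exact K.mul_mem (mg g) (mw n)
  · rw [Subgroup.map_le_iff_le_comap, Gt30, gen3, Subgroup.closure_le]
    rintro u (hu | hu | hu)
    · exact ⟨_, (theta_of (S, 1) u 1 (by simp [psi_S, hu])).symm⟩
    · exact ⟨_, (theta_of (T, w 12) u 1 (by simp [psi_T, hu])).symm⟩
    · exact ⟨_, (theta_of (S * S, w 1) u eU (hu.trans psi_L)).symm⟩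

theorem card_SL25 : Nat.card SL25 = 120 := by
  rw [Nat.card_eq_fintype_card]
  decide +kernel

end W

theorem stmt12 :
    Nat.card (Gt30.map (QuotientGroup.mk' scalarSub)) = 1800 ∧
    Nonempty (Gt30.map (QuotientGroup.mk' scalarSub) ≃*
      SL25 × Multiplicative (ZMod 15)) := by
  have e : Gt30.map (QuotientGroup.mk' scalarSub) ≃* SL25 × Multiplicative (ZMod 15) :=
    (MulEquiv.subgroupCongr W.range_theta.symm).trans (MonoidHom.ofInjective W.theta_inj).symm
  refine ⟨?_, ⟨e⟩⟩
  rw [Nat.card_congr e.toEquiv, Nat.card_prod, W.card_SL25]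
  simp
end
end

section
/- The image in PGL(3,ℂ) of the subgroup ⟨σ, τ, λ₂₀⟩ ⊆ GL(3,ℂ) under the canonical projection GL(3,ℂ) → PGL(3,ℂ) has order 1200, and there exists a group homomorphism φ : ℤ/2 → Aut(SL(2,5)) such that this image is isomorphic to (SL(2,5) ⋊_φ ℤ/2) × ℤ/5. -/
noncomputable section
open Matrix

def lambda20 : Matrix (Fin 3) (Fin 3) ℂ :=
  Matrix.diagonal ![1, 1, Complex.exp (2 * Real.pi * Complex.I / 20)]

/-- `⟨σ, τ, λ₂₀⟩`. -/
def Gt20 : Subgroup (GL (Fin 3) ℂ) := gen3 {sigma, tau, lambda20}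

namespace Aux16

abbrev Z5 := ℤ × ℤ × ℤ × ℤ

def Z5.add (a b : Z5) : Z5 := (a.1 + b.1, a.2.1 + b.2.1, a.2.2.1 + b.2.2.1, a.2.2.2 + b.2.2.2)

def Z5.smul (k : ℤ) (a : Z5) : Z5 := (k * a.1, k * a.2.1, k * a.2.2.1, k * a.2.2.2)

/-- Multiplication in `ℤ[ζ₅]` in the basis `1, ζ, ζ², ζ³`. -/
def Z5.mul (a b : Z5) : Z5 :=
  (a.1 * b.1 - (a.2.1 * b.2.2.2 + a.2.2.1 * b.2.2.1 + a.2.2.2 * b.2.1)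
      + (a.2.2.1 * b.2.2.2 + a.2.2.2 * b.2.2.1),
   a.1 * b.2.1 + a.2.1 * b.1 - (a.2.1 * b.2.2.2 + a.2.2.1 * b.2.2.1 + a.2.2.2 * b.2.1)
      + a.2.2.2 * b.2.2.2,
   a.1 * b.2.2.1 + a.2.1 * b.2.1 + a.2.2.1 * b.1
      - (a.2.1 * b.2.2.2 + a.2.2.1 * b.2.2.1 + a.2.2.2 * b.2.1),
   a.1 * b.2.2.2 + a.2.1 * b.2.2.1 + a.2.2.1 * b.2.1 + a.2.2.2 * b.1
      - (a.2.1 * b.2.2.2 + a.2.2.1 * b.2.2.1 + a.2.2.2 * b.2.1))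

def zp (n : ZMod 5) : Z5 :=
  if n = 0 then (1, 0, 0, 0) else if n = 1 then (0, 1, 0, 0) else if n = 2 then (0, 0, 1, 0)
  else if n = 3 then (0, 0, 0, 1) else (-1, -1, -1, -1)

abbrev M2 := Z5 × Z5 × Z5 × Z5

instance : DecidableEq Z5 := inferInstanceAs (DecidableEq (ℤ × ℤ × ℤ × ℤ))
instance : DecidableEq M2 := inferInstanceAs (DecidableEq (Z5 × Z5 × Z5 × Z5))

def M2.mul (A B : M2) : M2 :=
  (Z5.add (Z5.mul A.1 B.1) (Z5.mul A.2.1 B.2.2.1),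
   Z5.add (Z5.mul A.1 B.2.1) (Z5.mul A.2.1 B.2.2.2),
   Z5.add (Z5.mul A.2.2.1 B.1) (Z5.mul A.2.2.2 B.2.2.1),
   Z5.add (Z5.mul A.2.2.1 B.2.1) (Z5.mul A.2.2.2 B.2.2.2))

def M2.smul (k : ℤ) (A : M2) : M2 :=
  (Z5.smul k A.1, Z5.smul k A.2.1, Z5.smul k A.2.2.1, Z5.smul k A.2.2.2)

/-- five times the image of the antidiagonal element with lower left entry `c`. -/
def W (c : ZMod 5) : M2 :=
  if c = 1 then ((1, 2, 3, -1), (-2, -4, -1, -3), (-2, -4, -1, -3), (-1, -2, -3, 1))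
  else if c = 2 then ((2, 4, 1, 3), (1, 2, 3, -1), (1, 2, 3, -1), (-2, -4, -1, -3))
  else if c = 3 then ((-2, -4, -1, -3), (-1, -2, -3, 1), (-1, -2, -3, 1), (2, 4, 1, 3))
  else ((-1, -2, -3, 1), (2, 4, 1, 3), (2, 4, 1, 3), (1, 2, 3, -1))

/-- five times the image of the diagonal element with upper left entry `a`. -/
def H (a : ZMod 5) : M2 :=
  if a = 1 then ((5, 0, 0, 0), (0, 0, 0, 0), (0, 0, 0, 0), (5, 0, 0, 0))
  else if a = 2 then ((0, 0, 0, 0), (5, 0, 0, 0), (-5, 0, 0, 0), (0, 0, 0, 0))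
  else if a = 3 then ((0, 0, 0, 0), (-5, 0, 0, 0), (5, 0, 0, 0), (0, 0, 0, 0))
  else ((-5, 0, 0, 0), (0, 0, 0, 0), (0, 0, 0, 0), (-5, 0, 0, 0))

def Tm (x : ZMod 5) : M2 := (zp (3 * x), (0, 0, 0, 0), (0, 0, 0, 0), zp (2 * x))

/-- five times the (Weil) representation matrix. -/
def R (a b c d : ZMod 5) : M2 :=
  if c = 0 then M2.mul (Tm (a * b)) (H a)
  else M2.mul (M2.mul (Tm (a * c ^ 3)) (W c)) (Tm (d * c ^ 3))

set_option synthInstance.maxHeartbeats 400000 in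
set_option maxRecDepth 100000 in
lemma R_S : ∀ a b c d : ZMod 5, a * d - b * c = 1 →
    M2.mul (R a b c d) (R 0 (-1) 1 0) = M2.smul 5 (R b (-a) d (-c)) := by
  decide +kernel

set_option synthInstance.maxHeartbeats 400000 in
set_option maxRecDepth 100000 in
lemma R_T : ∀ a b c d : ZMod 5, a * d - b * c = 1 →
    M2.mul (R a b c d) (R 1 1 0 1) = M2.smul 5 (R a (a + b) c (c + d)) := by
  decide +kernel

set_option synthInstance.maxHeartbeats 400000 in
set_option maxRecDepth 100000 in
lemma R_inj : ∀ a b c d : ZMod 5, a * d - b * c = 1 →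
    R a b c d = R 1 0 0 1 → a = 1 ∧ b = 0 ∧ c = 0 ∧ d = 1 := by
  decide +kernel

set_option synthInstance.maxHeartbeats 400000 in
set_option maxRecDepth 100000 in
lemma R_det : ∀ a b c d : ZMod 5, a * d - b * c = 1 →
    Z5.add (Z5.mul (R a b c d).1 (R a b c d).2.2.2)
      (Z5.smul (-1) (Z5.mul (R a b c d).2.1 (R a b c d).2.2.1)) = (25, 0, 0, 0) := by
  decide +kernel

lemma z5_prim : IsPrimitiveRoot zeta5 5 := by
  have := Complex.isPrimitiveRoot_exp 5 (by norm_num)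
  simpa [zeta5] using this

lemma z5_pow : zeta5 ^ 5 = 1 := z5_prim.pow_eq_one

lemma z5_sum : 1 + zeta5 + zeta5 ^ 2 + zeta5 ^ 3 + zeta5 ^ 4 = 0 := by
  have := z5_prim.geom_sum_eq_zero (by norm_num)
  simpa [Finset.sum_range_succ] using this

def ev (a : Z5) : ℂ := a.1 + a.2.1 * zeta5 + a.2.2.1 * zeta5 ^ 2 + a.2.2.2 * zeta5 ^ 3

lemma ev_add (a b : Z5) : ev (Z5.add a b) = ev a + ev b := by
  simp only [ev, Z5.add]; push_cast; ring

lemma ev_smul (k : ℤ) (a : Z5) : ev (Z5.smul k a) = k * ev a := by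
  simp only [ev, Z5.smul]; push_cast; ring

lemma ev_mul (a b : Z5) : ev (Z5.mul a b) = ev a * ev b := by
  obtain ⟨a0, a1, a2, a3⟩ := a
  obtain ⟨b0, b1, b2, b3⟩ := b
  simp only [ev, Z5.mul]; push_cast
  linear_combination -((a1 * b3 + a2 * b2 + a3 * b1 : ℂ) + (a2 * b3 + a3 * b2) * (zeta5 - 1)
    + a3 * b3 * zeta5 * (zeta5 - 1)) * z5_sum

lemma ev_inj {a : Z5} (h : ev a = 0) : a = (0, 0, 0, 0) := by
  obtain ⟨a0, a1, a2, a3⟩ := a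
  have hm : Polynomial.cyclotomic 5 ℚ = minpoly ℚ zeta5 :=
    Polynomial.cyclotomic_eq_minpoly_rat z5_prim (by norm_num)
  have hd : (minpoly ℚ zeta5).natDegree = 4 := by
    rw [← hm, Polynomial.natDegree_cyclotomic]; decide
  have hl := linearIndependent_pow (K := ℚ) zeta5
  rw [hd, Fintype.linearIndependent_iff] at hl
  have := hl ![(a0 : ℚ), a1, a2, a3] (by
    simp only [Fin.sum_univ_four, Algebra.smul_def]
    simpa [ev] using h)
  have h0 := this 0
  have h1 := this 1
  have h2 := this 2
  have h3 := this 3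
  simp at h0 h1 h2 h3
  simp [h0, h1, h2, h3]

lemma ev_inj' {a b : Z5} (h : ev a = ev b) : a = b := by
  have h2 : ev (Z5.add a (Z5.smul (-1) b)) = 0 := by
    rw [ev_add, ev_smul, h]; push_cast; ring
  have h3 := ev_inj h2
  obtain ⟨a0, a1, a2, a3⟩ := a
  obtain ⟨b0, b1, b2, b3⟩ := b
  simp only [Z5.add, Z5.smul, Prod.mk.injEq] at h3 ⊢
  omega

def toMat (A : M2) : Matrix (Fin 2) (Fin 2) ℂ :=
  !![ev A.1 / 5, ev A.2.1 / 5; ev A.2.2.1 / 5, ev A.2.2.2 / 5]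

lemma toMat_mul {A B C : M2} (h : M2.mul A B = M2.smul 5 C) :
    toMat A * toMat B = toMat C := by
  simp only [M2.mul, M2.smul, Prod.mk.injEq] at h
  obtain ⟨h1, h2, h3, h4⟩ := h
  apply_fun ev at h1 h2 h3 h4
  simp only [ev_add, ev_mul, ev_smul] at h1 h2 h3 h4
  push_cast at h1 h2 h3 h4
  ext i j
  fin_cases i <;> fin_cases j <;> simp [toMat, Matrix.mul_apply, Fin.sum_univ_two]
  · linear_combination h1 / 25
  · linear_combination h2 / 25
  · linear_combination h3 / 25
  · linear_combination h4 / 25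

lemma toMat_inj {A B : M2} (h : toMat A = toMat B) : A = B := by
  have h1 := congrFun (congrFun h 0) 0
  have h2 := congrFun (congrFun h 0) 1
  have h3 := congrFun (congrFun h 1) 0
  have h4 := congrFun (congrFun h 1) 1
  simp [toMat] at h1 h2 h3 h4
  obtain ⟨a, b, c, d⟩ := A
  obtain ⟨a', b', c', d'⟩ := B
  simp only [Prod.mk.injEq]
  exact ⟨ev_inj' h1, ev_inj' h2, ev_inj' h3, ev_inj' h4⟩

def r (g : SL25) : Matrix (Fin 2) (Fin 2) ℂ := toMat (R (g 0 0) (g 0 1) (g 1 0) (g 1 1))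

def S : SL25 := ⟨!![0, -1; 1, 0], by decide⟩
def T : SL25 := ⟨!![1, 1; 0, 1], by decide⟩

lemma det_eq (g : SL25) : g 0 0 * g 1 1 - g 0 1 * g 1 0 = 1 := by
  have := g.2; rw [Matrix.det_fin_two] at this; exact this

lemma r_S (g : SL25) : r (g * S) = r g * r S := by
  symm
  have h := R_S _ _ _ _ (det_eq g)
  have := toMat_mul h
  have e : ((g * S : SL25) : Matrix (Fin 2) (Fin 2) (ZMod 5)) = g.1 * !![0, -1; 1, 0] := rfl
  simp only [r, e]
  simpa [S, Matrix.mul_apply, Fin.sum_univ_two] using this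

lemma r_T (g : SL25) : r (g * T) = r g * r T := by
  symm
  have h := R_T _ _ _ _ (det_eq g)
  have := toMat_mul h
  have e : ((g * T : SL25) : Matrix (Fin 2) (Fin 2) (ZMod 5)) = g.1 * !![1, 1; 0, 1] := rfl
  simp only [r, e]
  simpa [T, Matrix.mul_apply, Fin.sum_univ_two] using this

lemma r_one : r 1 = 1 := by
  have : R 1 0 0 1 = ((5, 0, 0, 0), (0, 0, 0, 0), (0, 0, 0, 0), (5, 0, 0, 0)) := by decide +kernel
  ext i j
  fin_cases i <;> fin_cases j <;> simp [r, this, toMat, ev]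

set_option synthInstance.maxHeartbeats 400000 in
set_option maxRecDepth 100000 in
lemma word : ∀ a b c d : ZMod 5, a * d - b * c = 1 → c ≠ 0 →
    (!![a, b; c, d] : Matrix (Fin 2) (Fin 2) (ZMod 5)) =
     !![1, (a + 1) * c ^ 3; 0, 1] * !![0, -1; 1, 0] * !![1, c; 0, 1] * !![0, -1; 1, 0] *
       !![1, (d + 1) * c ^ 3; 0, 1] := by
  decide +kernel

lemma T_pow (n : ℕ) : ((T ^ n : SL25) : Matrix (Fin 2) (Fin 2) (ZMod 5)) = !![1, (n : ZMod 5); 0, 1] := by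
  induction n with
  | zero => ext i j; fin_cases i <;> fin_cases j <;> simp
  | succ n ih =>
    rw [pow_succ, Matrix.SpecialLinearGroup.coe_mul, ih]
    ext i j; fin_cases i <;> fin_cases j <;> simp [T, Matrix.mul_apply, Fin.sum_univ_two, add_comm]

lemma gen_word (g : SL25) (hc : g 1 0 ≠ 0) : ∃ i j k : ℕ, g = T ^ i * S * T ^ j * S * T ^ k := by
  refine ⟨((g 0 0 + 1) * (g 1 0) ^ 3).val, (g 1 0).val, ((g 1 1 + 1) * (g 1 0) ^ 3).val, ?_⟩
  apply Subtype.ext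
  have := word _ _ _ _ (det_eq g) hc
  refine (Matrix.eta_fin_two g.1).trans (this.trans ?_)
  rw [Matrix.SpecialLinearGroup.coe_mul, Matrix.SpecialLinearGroup.coe_mul,
    Matrix.SpecialLinearGroup.coe_mul, Matrix.SpecialLinearGroup.coe_mul, T_pow, T_pow, T_pow,
    ZMod.natCast_zmod_val, ZMod.natCast_zmod_val, ZMod.natCast_zmod_val]
  rfl

lemma SSSS : S * S * S * S = 1 := by decide +kernel

lemma gen_ind (P : SL25 → Prop) (h1 : P 1) (hS : P S) (hT : P T)
    (hm : ∀ a b, P a → P b → P (a * b)) (g : SL25) : P g := by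
  have hp : ∀ n : ℕ, P (T ^ n) := by
    intro n
    induction n with
    | zero => simpa using h1
    | succ n ih => rw [pow_succ]; exact hm _ _ ih hT
  have key : ∀ g : SL25, g 1 0 ≠ 0 → P g := by
    intro g hg
    obtain ⟨i, j, k, rfl⟩ := gen_word g hg
    exact hm _ _ (hm _ _ (hm _ _ (hm _ _ (hp i) hS) (hp j)) hS) (hp k)
  by_cases hg : g 1 0 = 0
  · have h : P (g * S) := by
      apply key
      have hd := det_eq g
      rw [hg] at hd
      intro h
      have h' : g 1 1 = 0 := by
        have e : ((g * S : SL25) : Matrix (Fin 2) (Fin 2) (ZMod 5)) = g.1 * !![0, -1; 1, 0] := rfl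
        simpa [e, Matrix.mul_apply, Fin.sum_univ_two] using h
      rw [h'] at hd
      simp only [mul_zero, sub_zero] at hd
      exact absurd hd (by decide)
    have : g = g * S * S * S * S := by
      rw [mul_assoc, mul_assoc, mul_assoc, ← mul_assoc S S, ← mul_assoc _ S S, SSSS, mul_one]
    rw [this]
    exact hm _ _ (hm _ _ (hm _ _ h hS) hS) hS
  · exact key g hg

lemma r_mul (g h : SL25) : r (g * h) = r g * r h := by
  revert g
  apply gen_ind (fun h => ∀ g, r (g * h) = r g * r h)
  · intro g; simp [r_one]
  · exact r_S
  · exact r_T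
  · intro a b ha hb g
    rw [← mul_assoc, hb, ha, hb, mul_assoc]

def rM : SL25 →* Matrix (Fin 2) (Fin 2) ℂ where
  toFun := r
  map_one' := r_one
  map_mul' := r_mul

def rho2 : SL25 →* GL (Fin 2) ℂ := rM.toHomUnits

lemma rho2_coe (g : SL25) : (rho2 g : Matrix (Fin 2) (Fin 2) ℂ) = r g := rfl

lemma rho2_inj {g : SL25} (h : rho2 g = 1) : g = 1 := by
  have h1 : r g = r 1 := by rw [r_one, ← rho2_coe, h]; rfl
  have h2 := R_inj _ _ _ _ (det_eq g) (toMat_inj h1)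
  obtain ⟨h1, h2, h3, h4⟩ := h2
  ext i j
  fin_cases i <;> fin_cases j <;> simp [h1, h2, h3, h4]

lemma r_det (g : SL25) : (r g).det = 1 := by
  have h := R_det _ _ _ _ (det_eq g)
  apply_fun ev at h
  simp only [ev_add, ev_mul, ev_smul] at h
  have e : ev (25, 0, 0, 0) = 25 := by simp [ev]
  rw [e] at h
  push_cast at h
  simp only [r, toMat, Matrix.det_fin_two_of]
  linear_combination h / 25

lemma sqrt5_sq : sqrt5 * sqrt5 = 5 := by
  rw [sqrt5]
  linear_combination (zeta5 ^ 4 - 3 * zeta5 ^ 3 + zeta5 ^ 2 + 5 * zeta5 - 5) * z5_sum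


def zhom {G : Type*} [Group G] (n : ℕ) [NeZero n] (g : G) (h : g ^ n = 1) :
    Multiplicative (ZMod n) →* G where
  toFun x := g ^ (x.toAdd.val)
  map_one' := by simp
  map_mul' x y := by
    rw [toAdd_mul, ZMod.val_add, ← pow_add, ← pow_eq_pow_mod _ h]

lemma zhom_apply {G : Type*} [Group G] (n : ℕ) [NeZero n] (g : G) (h : g ^ n = 1)
    (x : Multiplicative (ZMod n)) : zhom n g h x = g ^ (x.toAdd.val) := rfl

def sc : ℂˣ →* GL (Fin 2) ℂ :=
  Units.map (algebraMap ℂ (Matrix (Fin 2) (Fin 2) ℂ)).toMonoidHom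

lemma sc_coe (c : ℂˣ) : (sc c : Matrix (Fin 2) (Fin 2) ℂ) = !![(c : ℂ), 0; 0, (c : ℂ)] := by
  ext i j
  fin_cases i <;> fin_cases j <;> simp [sc, Matrix.algebraMap_matrix_apply]

lemma sc_comm (c : ℂˣ) (g : GL (Fin 2) ℂ) : Commute (sc c) g := by
  apply Units.ext
  exact Algebra.commutes (c : ℂ) (g : Matrix (Fin 2) (Fin 2) ℂ)

def embM : Matrix (Fin 2) (Fin 2) ℂ →* Matrix (Fin 3) (Fin 3) ℂ where
  toFun := emb
  map_one' := by
    ext i j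
    fin_cases i <;> fin_cases j <;> simp [emb]
  map_mul' A B := by
    ext i j
    fin_cases i <;> fin_cases j <;>
      simp [emb, Matrix.mul_apply, Fin.sum_univ_two, Fin.sum_univ_three]

def E : GL (Fin 2) ℂ →* GL (Fin 3) ℂ := Units.map embM

lemma E_coe (g : GL (Fin 2) ℂ) :
    (E g : Matrix (Fin 3) (Fin 3) ℂ) = emb (g : Matrix (Fin 2) (Fin 2) ℂ) := rfl

def Q : GL (Fin 2) ℂ →* PGL3 := (QuotientGroup.mk' scalarSub).comp E

lemma Q_inj : Function.Injective Q := by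
  rw [injective_iff_map_eq_one]
  intro g hg
  have h1 : E g ∈ scalarSub := (QuotientGroup.eq_one_iff _).1 hg
  obtain ⟨c, hc⟩ := h1
  have h2 : (algebraMap ℂ (Matrix (Fin 3) (Fin 3) ℂ) (c : ℂ)) = emb (g : Matrix (Fin 2) (Fin 2) ℂ) :=
    congrArg Units.val hc
  have hcc := congrFun (congrFun h2 2) 2
  have h00 := congrFun (congrFun h2 0) 0
  have h01 := congrFun (congrFun h2 0) 1
  have h10 := congrFun (congrFun h2 1) 0
  have h11 := congrFun (congrFun h2 1) 1
  simp [emb, Matrix.algebraMap_matrix_apply] at hcc h00 h01 h10 h11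
  apply Units.ext
  ext i j
  fin_cases i <;> fin_cases j <;> simp [← h00, ← h01, ← h10, ← h11, hcc]

def uI : ℂˣ := Units.mk0 Complex.I Complex.I_ne_zero
def u5 : ℂˣ := Units.mk0 zeta5 (Complex.exp_ne_zero _)
def u20 : ℂˣ := Units.mk0 (Complex.exp (2 * Real.pi * Complex.I / 20)) (Complex.exp_ne_zero _)

lemma u20_4 : u20 ^ 4 = u5 := by
  apply Units.ext
  simp only [u20, u5, Units.val_pow_eq_pow_val, Units.val_mk0, zeta5]
  rw [← Complex.exp_nat_mul]
  congr 1
  push_cast; ring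

lemma u20_5 : u20 ^ 5 = uI := by
  apply Units.ext
  simp only [u20, uI, Units.val_pow_eq_pow_val, Units.val_mk0]
  rw [← Complex.exp_nat_mul]
  refine Eq.trans ?_ Complex.exp_pi_div_two_mul_I
  congr 1
  push_cast; ring

lemma u5_coe : (u5 : ℂ) = zeta5 := rfl

lemma uI_sq : (uI : ℂ) * uI = -1 := Complex.I_mul_I

lemma r_SS : r S * r S = -1 := by
  rw [← r_mul]
  have e : ((S * S : SL25) : Matrix (Fin 2) (Fin 2) (ZMod 5)) = !![-1, 0; 0, -1] := by decide +kernel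
  have : R (-1) 0 0 (-1) = ((-5, 0, 0, 0), (0, 0, 0, 0), (0, 0, 0, 0), (-5, 0, 0, 0)) := by
    decide +kernel
  simp only [r, e]
  ext i j
  fin_cases i <;> fin_cases j <;> simp [this, toMat, ev]

def J : GL (Fin 2) ℂ := sc uI * rho2 S

lemma J_sq : J ^ 2 = 1 := by
  have h : J ^ 2 = sc (uI * uI) * (rho2 S * rho2 S) := by
    rw [J, (sc_comm _ _).mul_pow, pow_two, pow_two, map_mul]
  rw [h]
  apply Units.ext
  rw [Units.val_mul, Units.val_mul, rho2_coe, r_SS, sc_coe, Units.val_mul, uI_sq]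
  ext i j
  fin_cases i <;> fin_cases j <;> simp

lemma conj_sq : (MulAut.conj S) ^ 2 = 1 := by
  rw [← map_pow]
  ext1 g
  have hs : S ^ 2 = -1 := by decide +kernel
  rw [hs]
  simp

def phi : Multiplicative (ZMod 2) →* MulAut SL25 := zhom 2 (MulAut.conj S) conj_sq

lemma compat (n : ℕ) (x : SL25) :
    rho2 (((MulAut.conj S) ^ n) x) = J ^ n * rho2 x * (J ^ n)⁻¹ := by
  rw [← map_pow, MulAut.conj_apply, map_mul, map_mul, map_inv, map_pow, J,
    (sc_comm _ _).mul_pow]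
  have := (sc_comm (uI ^ n) (rho2 S ^ n * rho2 x * (rho2 S ^ n)⁻¹)).eq
  rw [map_pow] at this
  rw [_root_.mul_inv_rev, ← mul_assoc, mul_assoc (sc uI ^ n), mul_assoc (sc uI ^ n), this,
    mul_inv_cancel_right]

def F1 : SL25 ⋊[phi] Multiplicative (ZMod 2) →* GL (Fin 2) ℂ :=
  SemidirectProduct.lift rho2 (zhom 2 J J_sq) (by
    intro n
    ext1 x
    exact compat _ x)

lemma u5_5 : sc u5 ^ 5 = 1 := by
  rw [← map_pow]
  have : u5 ^ 5 = 1 := Units.ext z5_pow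
  rw [this, map_one]

def F : (SL25 ⋊[phi] Multiplicative (ZMod 2)) × Multiplicative (ZMod 5) →* GL (Fin 2) ℂ :=
  MonoidHom.noncommCoprod F1 (zhom 5 (sc u5) u5_5) (by
    intro m n
    rw [zhom_apply, ← map_pow]
    exact (sc_comm _ _).symm)

lemma F_apply (g : SL25) (e : Multiplicative (ZMod 2)) (k : Multiplicative (ZMod 5)) :
    F (⟨g, e⟩, k) = rho2 g * J ^ (e.toAdd.val) * sc u5 ^ (k.toAdd.val) := rfl

lemma det_J : (J : Matrix (Fin 2) (Fin 2) ℂ).det = -1 := by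
  rw [J, Units.val_mul, Matrix.det_mul, rho2_coe, r_det, sc_coe, Matrix.det_fin_two_of, uI_sq]
  simp

lemma det_u5 : (sc u5 : Matrix (Fin 2) (Fin 2) ℂ).det = zeta5 ^ 2 := by
  rw [sc_coe, Matrix.det_fin_two_of]
  simp [u5_coe, pow_two]

lemma F_inj : Function.Injective F := by
  rw [injective_iff_map_eq_one]
  rintro ⟨⟨g, e⟩, k⟩ h
  rw [F_apply] at h
  have hd := congrArg (fun u : GL (Fin 2) ℂ => (u : Matrix (Fin 2) (Fin 2) ℂ).det) h
  simp only [Units.val_mul, Units.val_pow_eq_pow_val, Matrix.det_mul, Matrix.det_pow, rho2_coe,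
    r_det, det_J, det_u5, Units.val_one, Matrix.det_one, one_mul] at hd
  have he : e = 1 := by
    have h5 := congrArg (fun x : ℂ => x ^ 5) hd
    simp only [mul_pow, one_pow] at h5
    have h6 : ((zeta5 ^ 2) ^ (Multiplicative.toAdd k).val) ^ 5 = 1 := by
      rw [← pow_mul, ← pow_mul, ← mul_assoc, mul_comm (2 * _) 5, pow_mul, z5_pow, one_pow]
    rw [h6, mul_one] at h5
    generalize e = e' at h5 ⊢
    revert h5
    have : ∀ e : ZMod 2, (((-1 : ℂ) ^ e.val) ^ 5 = 1) → e = 0 := by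
      intro e
      fin_cases e
      · intro _; rfl
      · intro h
        exfalso
        have h' : ((-1 : ℂ) ^ 1) ^ 5 = 1 := h
        norm_num at h'
    exact this e'
  subst he
  have hk : k = 1 := by
    simp only [toAdd_one, ZMod.val_zero, pow_zero, one_mul] at hd
    rw [← pow_mul] at hd
    have h5 := (z5_prim.dvd_of_pow_eq_one _ hd)
    have h6 : 5 ∣ (Multiplicative.toAdd k).val := (Nat.Coprime.dvd_mul_left (by norm_num)).1 h5
    have h7 := Nat.eq_zero_of_dvd_of_lt h6 (ZMod.val_lt _)
    exact (ZMod.val_eq_zero (n := 5) _).1 h7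
  subst hk
  have hg : rho2 g = 1 := by simpa using h
  rw [rho2_inj hg]
  rfl

lemma E_S : (E (rho2 S) : Matrix (Fin 3) (Fin 3) ℂ) = sigma := by
  rw [E_coe, rho2_coe]
  have e : R 0 (-1) 1 0 =
    ((1, 2, 3, -1), (-2, -4, -1, -3), (-2, -4, -1, -3), (-1, -2, -3, 1)) := by decide +kernel
  have hS : r S = toMat ((1, 2, 3, -1), (-2, -4, -1, -3), (-2, -4, -1, -3), (-1, -2, -3, 1)) := by
    rw [← e]; rfl
  have h0 : sqrt5 ≠ 0 := by
    intro h; have := sqrt5_sq; rw [h] at this; norm_num at this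
  have key : ∀ x : ℂ, x / sqrt5 = x * sqrt5 / 5 := by
    intro x
    rw [div_eq_div_iff h0 (by norm_num), mul_assoc, sqrt5_sq]
  rw [hS]
  have hp : ev (1, 2, 3, -1) = (zeta5 - zeta5 ^ 4) * sqrt5 := by
    rw [sqrt5]; simp only [ev]; push_cast
    linear_combination (1 + zeta5 - 2 * zeta5 ^ 3 + zeta5 ^ 4) * z5_sum
  have hq : ev (-2, -4, -1, -3) = (zeta5 ^ 3 - zeta5 ^ 2) * sqrt5 := by
    rw [sqrt5]; simp only [ev]; push_cast
    linear_combination (-2 - 2 * zeta5 + 3 * zeta5 ^ 2 - zeta5 ^ 3) * z5_sum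
  have hp' : ev (-1, -2, -3, 1) = -((zeta5 - zeta5 ^ 4) * sqrt5) := by
    rw [← hp]; simp only [ev]; push_cast; ring
  ext i j
  fin_cases i <;> fin_cases j <;> simp [emb, sigma, toMat, hp, hq, hp', key] <;> ring

lemma E_T : (E (rho2 T * sc u5 ^ 3) : Matrix (Fin 3) (Fin 3) ℂ) = tau := by
  rw [E_coe, Units.val_mul, ← map_pow, sc_coe, rho2_coe]
  have e : R 1 1 0 1 =
    ((0, 0, 0, 5), (0, 0, 0, 0), (0, 0, 0, 0), (0, 0, 5, 0)) := by decide +kernel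
  have hT : r T = toMat ((0, 0, 0, 5), (0, 0, 0, 0), (0, 0, 0, 0), (0, 0, 5, 0)) := by
    rw [← e]; rfl
  rw [hT]
  have h5 := z5_pow
  ext i j
  fin_cases i <;> fin_cases j <;>
    simp [emb, tau, toMat, ev, u5_coe, Matrix.mul_apply, Fin.sum_univ_two]
  · linear_combination zeta5 * h5
  · linear_combination h5

lemma mk_L (L : GL (Fin 3) ℂ) (h : (L : Matrix (Fin 3) (Fin 3) ℂ) = lambda20) :
    QuotientGroup.mk' scalarSub L = (Q (sc u20))⁻¹ := by
  rw [eq_inv_iff_mul_eq_one]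
  change QuotientGroup.mk' scalarSub L * QuotientGroup.mk' scalarSub (E (sc u20)) = 1
  rw [← map_mul]
  apply (QuotientGroup.eq_one_iff _).2
  refine ⟨u20, ?_⟩
  apply Units.ext
  rw [Units.val_mul, h, E_coe, sc_coe]
  ext i j
  fin_cases i <;> fin_cases j <;>
    simp [emb, lambda20, u20, Matrix.algebraMap_matrix_apply]

def Lu : GL (Fin 3) ℂ where
  val := lambda20
  inv := Matrix.diagonal ![1, 1, (Complex.exp (2 * Real.pi * Complex.I / 20))⁻¹]
  val_inv := by
    rw [lambda20, Matrix.diagonal_mul_diagonal, ← Matrix.diagonal_one]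
    congr 1; ext i; fin_cases i <;> simp
  inv_val := by
    rw [lambda20, Matrix.diagonal_mul_diagonal, ← Matrix.diagonal_one]
    congr 1; ext i; fin_cases i <;> simp

lemma range_eq : (Q.comp F).range = Gt20.map (QuotientGroup.mk' scalarSub) := by
  have FS : ∀ g, rho2 g ∈ F.range := fun g => ⟨(⟨g, 1⟩, 1), by rw [F_apply]; simp⟩
  have F5 : sc u5 ∈ F.range := ⟨(⟨1, 1⟩, Multiplicative.ofAdd 1), by
    rw [F_apply, toAdd_ofAdd, ZMod.val_one'' (by norm_num)]; simp⟩
  have FJ : J ∈ F.range := ⟨(⟨1, Multiplicative.ofAdd 1⟩, 1), by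
    rw [F_apply, toAdd_ofAdd, ZMod.val_one'' (by norm_num)]; simp⟩
  have FI : sc uI ∈ F.range := by
    have := F.range.mul_mem FJ (F.range.inv_mem (FS S))
    rwa [J, mul_inv_cancel_right] at this
  have F20 : sc u20 ∈ F.range := by
    have h : u20 = uI * u5⁻¹ := by
      rw [eq_mul_inv_iff_mul_eq, ← u20_4, ← u20_5, ← pow_succ']
    rw [h, map_mul, map_inv]
    exact F.range.mul_mem FI (F.range.inv_mem F5)
  have FQ : ∀ x ∈ F.range, Q x ∈ (Q.comp F).range := by
    rintro _ ⟨y, rfl⟩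
    exact ⟨y, rfl⟩
  set U := Gt20.map (QuotientGroup.mk' scalarSub) with hU
  have inU : ∀ g : GL (Fin 3) ℂ, (g : Matrix (Fin 3) (Fin 3) ℂ) ∈
      ({sigma, tau, lambda20} : Set (Matrix (Fin 3) (Fin 3) ℂ)) → QuotientGroup.mk' scalarSub g ∈ U :=
    fun g hg => Subgroup.mem_map_of_mem _ (Subgroup.subset_closure hg)
  have US : Q (rho2 S) ∈ U := inU _ (by rw [E_S]; simp)
  have U20 : Q (sc u20) ∈ U := by
    have := inU Lu (by simp [Lu])
    rw [mk_L Lu rfl] at this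
    exact (Subgroup.inv_mem_iff U).1 this
  have U5 : Q (sc u5) ∈ U := by
    rw [← u20_4, map_pow, map_pow]; exact U.pow_mem U20 4
  have UI : Q (sc uI) ∈ U := by
    rw [← u20_5, map_pow, map_pow]; exact U.pow_mem U20 5
  have UT : Q (rho2 T) ∈ U := by
    have h : Q (rho2 T * sc u5 ^ 3) ∈ U := inU _ (by rw [E_T]; simp)
    rw [map_mul, map_pow] at h
    exact (Subgroup.mul_mem_cancel_right U (U.pow_mem U5 3)).1 h
  have UR : ∀ g, Q (rho2 g) ∈ U := by
    apply gen_ind (fun g => Q (rho2 g) ∈ U)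
    · simp
    · exact US
    · exact UT
    · intro a b ha hb
      rw [map_mul, map_mul]; exact U.mul_mem ha hb
  apply le_antisymm
  · rintro _ ⟨⟨⟨g, e⟩, k⟩, rfl⟩
    rw [MonoidHom.comp_apply, F_apply, map_mul, map_mul, map_pow, map_pow, J, map_mul]
    exact U.mul_mem (U.mul_mem (UR g) (U.pow_mem (U.mul_mem UI US) _)) (U.pow_mem U5 _)
  · rw [hU, Subgroup.map_le_iff_le_comap, Gt20, gen3, Subgroup.closure_le]
    intro g hg
    rw [SetLike.mem_coe, Subgroup.mem_comap]
    rcases hg with h | h | h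
    · have : g = E (rho2 S) := Units.ext (by rw [E_S, h])
      rw [this]
      exact FQ _ (FS S)
    · have : g = E (rho2 T * sc u5 ^ 3) := Units.ext (by rw [E_T, h])
      rw [this]
      exact FQ _ (F.range.mul_mem (FS T) (F.range.pow_mem F5 3))
    · rw [mk_L g h]
      exact (Q.comp F).range.inv_mem (FQ _ F20)

lemma card_SL : Nat.card SL25 = 120 := by
  rw [Nat.card_eq_fintype_card]
  decide +kernel

def theEquiv : (SL25 ⋊[phi] Multiplicative (ZMod 2)) × Multiplicative (ZMod 5) ≃*
    Gt20.map (QuotientGroup.mk' scalarSub) :=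
  (MonoidHom.ofInjective (f := Q.comp F) (Q_inj.comp F_inj)).trans (MulEquiv.subgroupCongr range_eq)

end Aux16

theorem stmt16 :
    Nat.card (Gt20.map (QuotientGroup.mk' scalarSub)) = 1200 ∧
    ∃ φ : Multiplicative (ZMod 2) →* MulAut SL25,
      Nonempty (Gt20.map (QuotientGroup.mk' scalarSub) ≃*
        (SL25 ⋊[φ] Multiplicative (ZMod 2)) × Multiplicative (ZMod 5)) := by
  refine ⟨?_, Aux16.phi, ⟨Aux16.theEquiv.symm⟩⟩
  rw [← Nat.card_congr Aux16.theEquiv.toEquiv, Nat.card_prod, SemidirectProduct.card,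
    Aux16.card_SL]
  simp
end
end
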